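/- Let X be a simply connected, locally simply connected metric space, D a countable dense subset, and f a proper path in E(X,D). Then there exists a proper path g in E(X,D), homotopic to f rel endpoints, such that the word W^g read off from g is the reduced word equivalent to W^f. -/

import Mathlib

open Classical

noncomputable section

namespace EarringPaper

variable {X : Type*} [MetricSpace X]

/-- The earring space `E(X,D)`: the base copy `X × {o}` together with a copy of the
circle attached at each point `d n` of the countable set `D = range d`. -/
structure ESp (X : Type*) [MetricSpace X] (d : ℕ+ → X) where
  pt : X × Circle
  mem : pt.2 = 1 ∨ ∃ n : ℕ+, pt.1 = d n

/-- The scaling weight `1/n` at `x = d n` (and `0` off `D`). -/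
def wt (d : ℕ+ → X) (x : X) : ℝ :=
  if h : ∃ n : ℕ+, x = d n then 1 / (h.choose : ℝ) else 0

/-- The earring metric `ρ` on `E(X,D)`. -/
def rho (d : ℕ+ → X) (p q : X × Circle) : ℝ :=
  if p.1 = q.1 ∧ ∃ n : ℕ+, p.1 = d n then wt d p.1 * dist p.2 q.2
  else dist p.1 q.1 + wt d p.1 * dist p.2 1 + wt d q.1 * dist q.2 1

/-- `E(X,D)` carries the topology of the metric `ρ` (generated by the `ρ`-balls). -/
instance (d : ℕ+ → X) : TopologicalSpace (ESp X d) :=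
  TopologicalSpace.generateFrom
    {s | ∃ (p : ESp X d) (r : ℝ), s = {q : ESp X d | rho d p.pt q.pt < r}}

/-- The points of the base copy `X × {o}` of `X` inside `E(X,D)`. -/
def InX {d : ℕ+ → X} (p : ESp X d) : Prop := p.pt.2 = 1

/-- The inclusion `X → E(X,D)`, `x ↦ (x,o)`. -/
def emb (d : ℕ+ → X) (x : X) : ESp X d := ⟨(x, 1), Or.inl rfl⟩

/-- `f` traverses, on `[u,v]`, the fixed winding of the circle attached at `d n`. -/
def IsWinding (d : ℕ+ → X) (f : ℝ → ESp X d) (u v : ℝ) (n : ℕ+) : Prop :=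
  ∃ φ : ℝ → ℝ, ContinuousOn φ (Set.Icc u v) ∧ MonotoneOn φ (Set.Icc u v) ∧
    φ u = 0 ∧ φ v = 1 ∧
    ∀ t ∈ Set.Icc u v, (f t).pt = (d n, Circle.exp (2 * Real.pi * φ t))

/-- `f` traverses, on `[u,v]`, the reverse of the fixed winding of the circle at `d n`. -/
def IsRevWinding (d : ℕ+ → X) (f : ℝ → ESp X d) (u v : ℝ) (n : ℕ+) : Prop :=
  ∃ φ : ℝ → ℝ, ContinuousOn φ (Set.Icc u v) ∧ MonotoneOn φ (Set.Icc u v) ∧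
    φ u = 0 ∧ φ v = 1 ∧
    ∀ t ∈ Set.Icc u v, (f t).pt = (d n, Circle.exp (-(2 * Real.pi) * φ t))

/-- A proper path in `E(X,D)` (with domain `[a,b]`): its endpoints lie in `X`, and each
maximal excursion out of `X` returning to the same point is a single winding or reverse
winding of one of the attached circles. -/
def IsProper (d : ℕ+ → X) (f : ℝ → ESp X d) (a b : ℝ) : Prop :=
  ContinuousOn f (Set.Icc a b) ∧ InX (f a) ∧ InX (f b) ∧
  ∀ u v, a ≤ u → u < v → v ≤ b → InX (f u) → InX (f v) →
    (∀ t ∈ Set.Ioo u v, ¬InX (f t)) → f u = f v →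
    ∃ n : ℕ+, IsWinding d f u v n ∨ IsRevWinding d f u v n

/-- Homotopy of paths `[a,b] → E(X,D)` relative to the endpoints. -/
def HtpyRel (d : ℕ+ → X) (f g : ℝ → ESp X d) (a b : ℝ) : Prop :=
  ∃ H : ℝ × ℝ → ESp X d,
    ContinuousOn H (Set.Icc a b ×ˢ Set.Icc (0 : ℝ) 1) ∧
    (∀ s ∈ Set.Icc a b, H (s, 0) = f s ∧ H (s, 1) = g s) ∧
    (∀ t ∈ Set.Icc (0 : ℝ) 1, H (a, t) = f a ∧ H (b, t) = f b)

/-- `Y` is locally simply connected: every point has a neighborhood basis of simply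
connected neighborhoods. -/
def LocSimplyConnected (Y : Type*) [TopologicalSpace Y] : Prop :=
  ∀ y : Y, ∀ U ∈ nhds y, ∃ V ∈ nhds y, V ⊆ U ∧ SimplyConnectedSpace V

end EarringPaper

noncomputable section

namespace EarringPaper

/-- An infinitary word over the alphabet `D`: a function from a countable linearly
ordered index set to the letters `a`/`a⁻` (`(a, true)`/`(a, false)`), in which each
letter occurs only finitely often. -/
structure InfWord (D : Type*) where
  ι : Type
  [ord : LinearOrder ι]
  [cnt : Countable ι]
  letter : ι → D × Bool
  finOcc : ∀ a : D, {i : ι | (letter i).1 = a}.Finite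

attribute [instance] InfWord.ord InfWord.cnt

variable {D : Type*}

lemma InfWord.finF (W : InfWord D) (F : Finset D) :
    {i : W.ι | (W.letter i).1 ∈ F}.Finite := by
  have h : {i : W.ι | (W.letter i).1 ∈ F} = ⋃ a ∈ F, {i : W.ι | (W.letter i).1 = a} := by
    ext i; simp
  rw [h]
  exact F.finite_toSet.biUnion fun a _ => W.finOcc a

/-- The finite word `W_F`: the restriction of `W` to the letters from the finite set `F`,
evaluated as an element of the free group on `D`. -/
def InfWord.evalF (W : InfWord D) (F : Finset D) : FreeGroup D :=
  (((W.finF F).toFinset.sort (· ≤ ·)).map fun i => FreeGroup.mk [W.letter i]).prod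

/-- `W` is equivalent to the empty word: all its finite restrictions `W_F` are trivial. -/
def InfWord.IsNull (W : InfWord D) : Prop := ∀ F : Finset D, W.evalF F = 1

/-- The subword of `W` supported on a set `S` of indices. -/
def InfWord.restrict (W : InfWord D) (S : Set W.ι) : InfWord D where
  ι := S
  letter i := W.letter i.val
  finOcc a := by
    have h : {i : S | (W.letter i.val).1 = a} =
        Subtype.val ⁻¹' {i : W.ι | (W.letter i).1 = a} := rfl
    rw [h]
    exact (W.finOcc a).preimage Subtype.val_injective.injOn

/-- An order-convex set of indices (the support of a subword). -/
def IsConvexSub {W : InfWord D} (S : Set W.ι) : Prop :=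
  ∀ i ∈ S, ∀ j ∈ S, ∀ k, i ≤ k → k ≤ j → k ∈ S

/-- An infinitary word is reduced if no nonempty subword is equivalent to the empty word. -/
def InfWord.Reduced (W : InfWord D) : Prop :=
  ∀ S : Set W.ι, S.Nonempty → IsConvexSub S → ¬(W.restrict S).IsNull

/-- A noncrossing inverse pairing on the infinitary word `W`. -/
structure InfNCIP (W : InfWord D) (Γ : Set (W.ι × W.ι)) : Prop where
  lt : ∀ p ∈ Γ, p.1 < p.2
  inv : ∀ p ∈ Γ, (W.letter p.1).1 = (W.letter p.2).1 ∧
    (W.letter p.1).2 = !(W.letter p.2).2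
  disj : ∀ p ∈ Γ, ∀ q ∈ Γ, p ≠ q → p.1 ≠ q.1 ∧ p.1 ≠ q.2 ∧ p.2 ≠ q.1 ∧ p.2 ≠ q.2
  noncross : ∀ p ∈ Γ, ∀ q ∈ Γ, ¬(p.1 < q.1 ∧ q.1 < p.2 ∧ p.2 < q.2)
  covered : ∀ p ∈ Γ, ∀ k, p.1 ≤ k → k ≤ p.2 → ∃ q ∈ Γ, q.1 = k ∨ q.2 = k

end EarringPaper

namespace EarringPaper

/-- `W` is the word `W^f` read off from the proper path `f : [a,b] → E(X,D)`, realized by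
the family of disjoint open intervals `(u i, v i)`: these intervals are exactly the
components of `f⁻¹(E(X,D)∖X)`, listed in order, and on the `i`-th of them `f` performs the
winding (or reverse winding, according to the sign of the letter) of the circle attached
at `d ((W.letter i).1)`. -/
def Realizes {X : Type*} [MetricSpace X] (d : ℕ+ → X) (f : ℝ → ESp X d) (a b : ℝ)
    (W : InfWord ℕ+) (u v : W.ι → ℝ) : Prop :=
  (∀ i, a ≤ u i ∧ u i < v i ∧ v i ≤ b) ∧
  (∀ i j, i < j → v i ≤ u j) ∧
  (∀ i, if (W.letter i).2 then IsWinding d f (u i) (v i) (W.letter i).1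
        else IsRevWinding d f (u i) (v i) (W.letter i).1) ∧
  (∀ t ∈ Set.Icc a b, InX (f t) ↔ ∀ i, t ∉ Set.Ioo (u i) (v i))

end EarringPaper

/-!
Choose a maximal noncrossing inverse pairing `Γ` of the word read off from `f`. Erasing the letters
matched by `Γ` does not change the word up to equivalence, and the remaining word is reduced: a null
subword of it would carry a complete pairing of its own, an ultrafilter limit of finite
cancellations, with which `Γ` could be enlarged.

The erasure is realized by a homotopy as follows. The projection of `f` to `X` takes equal values on
matched intervals. Run along it from `a` to `b` and back again: joining matched intervals to each
other and points of unmatched intervals to their mirror images gives a noncrossing family of leaves,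
at whose endpoints the doubled path `p` takes equal values. Draw the leaf from `s` to `s'` as the
legs from `(s, s)` to `(s, s')` and from `(s, s')` to `(s', s')`. Prescribing the value `p s` on
these legs is consistent, and since `X` is simply connected and locally simply connected it extends
to a continuous map of the plane: fill in dyadic squares, of size comparable to the distance from
the legs, by nearly smallest possible maps. Over this map the diagonal path can be swept away, and
along the legs of a matched pair the two opposite windings stay on the same circle until they
cancel.
-/

namespace EarringPaper

section

open Set Topology unitInterval

section SquareFilling

/-- The first coordinate `max (2s - 1) 0` at time `s` of the boundary path of the unit square
from `(0,0)` to `(1,1)` through `(0,1)`. -/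
def late (s : I) : I := projIcc 0 1 zero_le_one (2 * s - 1)

/-- The second coordinate `min (2s) 1` at time `s` of the boundary path of the unit square
from `(0,0)` to `(1,1)` through `(0,1)`. -/
def early (s : I) : I := projIcc 0 1 zero_le_one (2 * s)

/-- The straight-line homotopy in the unit square between the two boundary paths from `(0,0)` to
`(1,1)`, with the homotopy parameter first. -/
def chord (z : I × I) : I × I :=
  (Icc.convexComb (late z.2) (early z.2) z.1, Icc.convexComb (early z.2) (late z.2) z.1)

lemma coe_late (s : I) : (late s : ℝ) = max (2 * s - 1 : ℝ) 0 := by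
  rw [late, coe_projIcc, min_eq_right (by linarith [s.2.2]), max_comm]

lemma coe_early (s : I) : (early s : ℝ) = min (2 * s : ℝ) 1 := by
  rw [early, coe_projIcc, max_eq_right (le_min zero_le_one (by linarith [s.2.1])), min_comm]

lemma late_add_early (s : I) : (late s + early s : ℝ) = 2 * s := by
  rw [coe_late, coe_early]; grind

lemma late_lt_early {s : I} (h0 : s ≠ 0) (h1 : s ≠ 1) : late s < early s := by
  have p0 : (0 : ℝ) < s := unitInterval.pos_iff_ne_zero.2 h0
  have p1 : (s : ℝ) < 1 := unitInterval.lt_one_iff_ne_one.2 h1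
  rw [← Subtype.coe_lt_coe, coe_late, coe_early]; grind

lemma continuous_chord : Continuous chord := by
  unfold chord late early
  fun_prop

lemma chord_fst_add_snd (z : I × I) : ((chord z).1 + (chord z).2 : ℝ) = 2 * z.2 := by
  simp only [chord, Icc.coe_convexComb]
  linear_combination late_add_early z.2

lemma eq_or_of_chord_eq {z w : I × I} (h : chord z = chord w) :
    z.2 = w.2 ∧ (z.1 = w.1 ∨ z.2 = 0 ∨ z.2 = 1) := by
  have h2 : z.2 = w.2 := by
    have := chord_fst_add_snd z
    rw [h, chord_fst_add_snd] at this
    exact Subtype.ext (by linarith)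
  refine ⟨h2, or_iff_not_imp_right.2 fun h01 => ?_⟩
  obtain ⟨h0, h1⟩ := not_or.1 h01
  have hlt : (late z.2 : ℝ) < early z.2 := late_lt_early h0 h1
  have h3 : (z.1 - w.1 : ℝ) * (early z.2 - late z.2) = 0 := by
    have := congrArg (fun p : I × I => (p.1 : ℝ)) h
    simp only [chord, Icc.coe_convexComb, ← h2] at this
    linear_combination this
  exact Subtype.ext (sub_eq_zero.1 ((mul_eq_zero.1 h3).resolve_right (by linarith)))

lemma chord_surjective : Function.Surjective chord := by
  rintro ⟨x, y⟩
  let s : I := ⟨(x + y) / 2, by linarith [x.2.1, y.2.1], by linarith [x.2.2, y.2.2]⟩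
  have hs : (2 * s : ℝ) = x + y := by simp only [s]; ring
  have hlx : late s ≤ x := by
    rw [← Subtype.coe_le_coe, coe_late, hs]; exact max_le (by linarith [y.2.2]) x.2.1
  have hxe : x ≤ early s := by
    rw [← Subtype.coe_le_coe, coe_early, hs]; exact le_min (by linarith [y.2.1]) x.2.2
  obtain ⟨t, ht⟩ : ∃ t, Icc.convexComb (late s) (early s) t = x :=
    ⟨_, (Icc.eq_convexComb hlx hxe).symm⟩
  refine ⟨(t, s), Prod.ext ht (Subtype.ext ?_)⟩
  have hsum := chord_fst_add_snd (t, s)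
  rw [show (chord (t, s)).1 = x from ht] at hsum
  linarith

lemma isQuotientMap_chord : IsQuotientMap chord :=
  continuous_chord.isClosedMap.isQuotientMap continuous_chord chord_surjective

/-- The point of `I` halfway between `0` and `s`. -/
def lowerHalf (s : I) : I := Icc.convexComb 0 s ⟨1 / 2, by norm_num, by norm_num⟩

/-- The point of `I` halfway between `s` and `1`. -/
def upperHalf (s : I) : I := Icc.convexComb s 1 ⟨1 / 2, by norm_num, by norm_num⟩

lemma coe_lowerHalf (s : I) : (lowerHalf s : ℝ) = s / 2 := by
  simp only [lowerHalf, Icc.coe_convexComb, Icc.coe_zero]; ring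

lemma coe_upperHalf (s : I) : (upperHalf s : ℝ) = (1 + s) / 2 := by
  simp only [upperHalf, Icc.coe_convexComb, Icc.coe_one]; ring

lemma late_lowerHalf (s : I) : late (lowerHalf s) = 0 :=
  Subtype.ext (by rw [coe_late, coe_lowerHalf]; exact max_eq_right (by linarith [s.2.2]))

lemma early_lowerHalf (s : I) : early (lowerHalf s) = s :=
  Subtype.ext (by
    rw [coe_early, coe_lowerHalf, mul_div_cancel₀ _ two_ne_zero]; exact min_eq_left s.2.2)

lemma late_upperHalf (s : I) : late (upperHalf s) = s :=
  Subtype.ext (by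
    rw [coe_late, coe_upperHalf, mul_div_cancel₀ _ two_ne_zero, add_sub_cancel_left]
    exact max_eq_left s.2.1)

lemma early_upperHalf (s : I) : early (upperHalf s) = 1 :=
  Subtype.ext (by rw [coe_early, coe_upperHalf]; exact min_eq_right (by linarith [s.2.1]))

variable {Y : Type*} [TopologicalSpace Y]

lemma trans_lowerHalf {x y z : Y} (γ : Path x y) (γ' : Path y z) (s : I) :
    γ.trans γ' (lowerHalf s) = γ s := by
  rw [← Path.extend_extends', Path.extend_trans_of_le_half] <;> rw [coe_lowerHalf]
  · rw [mul_div_cancel₀ _ two_ne_zero, Path.extend_extends']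
  · linarith [s.2.2]

lemma trans_upperHalf {x y z : Y} (γ : Path x y) (γ' : Path y z) (s : I) :
    γ.trans γ' (upperHalf s) = γ' s := by
  rw [← Path.extend_extends', Path.extend_trans_of_half_le] <;> rw [coe_upperHalf]
  · rw [mul_div_cancel₀ _ two_ne_zero, add_sub_cancel_left, Path.extend_extends']
  · linarith [s.2.1]

/-- A homotopy of paths is constant on the two sides of the square collapsed by `chord`. -/
lemma exists_comp_chord_eq {x y : Y} {p q : Path x y} (K : p.Homotopy q) :
    ∃ F : C(I × I, Y), ∀ z, F (chord z) = K z := by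
  have hK : ∀ z w, chord z = chord w → K z = K w := by
    rintro ⟨t, s⟩ ⟨t', s'⟩ h
    obtain ⟨rfl, rfl | rfl | rfl⟩ := eq_or_of_chord_eq h
    · rfl
    · exact (K.source t).trans (K.source t').symm
    · exact (K.target t).trans (K.target t').symm
  have hq : IsQuotientMap (⟨chord, continuous_chord⟩ : C(I × I, I × I)) := isQuotientMap_chord
  exact ⟨hq.lift K.toContinuousMap hK, DFunLike.congr_fun (hq.lift_comp K.toContinuousMap hK)⟩

lemma exists_square_filling [SimplyConnectedSpace Y] (b t l r : C(I, Y))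
    (hbl : b 0 = l 0) (hbr : b 1 = r 0) (htl : t 0 = l 1) (htr : t 1 = r 1) :
    ∃ F : C(I × I, Y), (∀ s, F (s, 0) = b s) ∧ (∀ s, F (s, 1) = t s) ∧
      (∀ s, F (0, s) = l s) ∧ ∀ s, F (1, s) = r s := by
  let pb : Path (l 0) (r 0) := ⟨b, hbl, hbr⟩
  let pt : Path (l 1) (r 1) := ⟨t, htl, htr⟩
  let pl : Path (l 0) (l 1) := ⟨l, rfl, rfl⟩
  let pr : Path (r 0) (r 1) := ⟨r, rfl, rfl⟩
  obtain ⟨K⟩ := SimplyConnectedSpace.paths_homotopic (pl.trans pt) (pb.trans pr)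
  obtain ⟨F, hF⟩ := exists_comp_chord_eq K
  have h0 (s : I) : F (late s, early s) = (pl.trans pt) s := by
    have h := (hF (0, s)).trans (K.apply_zero s)
    rwa [chord, Icc.convexComb_zero, Icc.convexComb_zero] at h
  have h1 (s : I) : F (early s, late s) = (pb.trans pr) s := by
    have h := (hF (1, s)).trans (K.apply_one s)
    rwa [chord, Icc.convexComb_one, Icc.convexComb_one] at h
  refine ⟨F, fun s => ?_, fun s => ?_, fun s => ?_, fun s => ?_⟩
  · have h := h1 (lowerHalf s)
    rwa [early_lowerHalf, late_lowerHalf, trans_lowerHalf] at h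
  · have h := h0 (upperHalf s)
    rwa [early_upperHalf, late_upperHalf, trans_upperHalf] at h
  · have h := h0 (lowerHalf s)
    rwa [early_lowerHalf, late_lowerHalf, trans_lowerHalf] at h
  · have h := h1 (upperHalf s)
    rwa [early_upperHalf, late_upperHalf, trans_upperHalf] at h

end SquareFilling

section Taut

variable {K : Type*} [TopologicalSpace K] {X : Type*} [MetricSpace X]

/-- `F` is of nearly minimal extent about `F k` among all maps agreeing with it on `B`: its
distance from the constant map `F k` is at most twice the least possible. -/
def IsTaut (B : Set K) (k : K) (F : C(K, X)) : Prop :=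
  ∀ G : C(K, X), EqOn G F B → ∀ r > 0, (∀ z, dist (G z) (F k) ≤ r) → ∀ z, dist (F z) (F k) ≤ 2 * r

lemma exists_isTaut_eqOn [CompactSpace K] {B : Set K} {k : K} (hk : k ∈ B) (F₀ : C(K, X)) :
    ∃ F : C(K, X), EqOn F F₀ B ∧ IsTaut B k F := by
  let E : Set ℝ := {r | ∃ G : C(K, X), EqOn G F₀ B ∧ ∀ z, dist (G z) (F₀ k) ≤ r}
  have hE : E.Nonempty := by
    obtain ⟨r, hr⟩ := (isCompact_range (f := fun z => dist (F₀ z) (F₀ k)) (by fun_prop)).bddAbove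
    exact ⟨r, F₀, eqOn_refl F₀ B, fun z => hr ⟨z, rfl⟩⟩
  have hE0 : ∀ r ∈ E, 0 ≤ r := fun r ⟨_, _, hG⟩ => dist_nonneg.trans (hG k)
  have hinf {G : C(K, X)} (hG : EqOn G F₀ B) {r : ℝ} (hr : ∀ z, dist (G z) (F₀ k) ≤ r) :
      sInf E ≤ r := csInf_le ⟨0, hE0⟩ ⟨G, hG, hr⟩
  rcases (le_csInf hE hE0).eq_or_lt with h0 | h0
  · have hconst : ∀ z ∈ B, F₀ k = F₀ z := fun z hz => by
      refine (dist_le_zero.1 (le_of_forall_pos_lt_add fun ε hε => ?_)).symm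
      obtain ⟨r, ⟨G, hG, hr⟩, hrε⟩ := exists_lt_of_csInf_lt hE (h0 ▸ hε)
      rw [zero_add, ← hG hz]
      exact (hr z).trans_lt hrε
    exact ⟨ContinuousMap.const K (F₀ k), hconst, fun G _ r hr _ z => by
      rw [ContinuousMap.const_apply, ContinuousMap.const_apply, dist_self]; positivity⟩
  · obtain ⟨e, ⟨F, hF, he⟩, hlt⟩ :=
      exists_lt_of_csInf_lt hE (show sInf E < 2 * sInf E by linarith)
    refine ⟨F, hF, fun G hG r _ hr z => ?_⟩
    rw [hF hk] at hr ⊢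
    linarith [he z, hinf (hG.trans hF) hr]

/-- The boundary of the unit square. -/
def squareBoundary : Set (I × I) := {z | z.1 = 0 ∨ z.1 = 1 ∨ z.2 = 0 ∨ z.2 = 1}

/-- A path of nearly minimal extent among the paths with the same endpoints. -/
abbrev IsTautPath (h : C(I, X)) : Prop := IsTaut {0, 1} 0 h

/-- A square of nearly minimal extent among the squares with the same boundary. -/
abbrev IsTautSquare (F : C(I × I, X)) : Prop := IsTaut squareBoundary (0, 0) F

lemma exists_tautPath [PathConnectedSpace X] (x y : X) :
    ∃ h : C(I, X), h 0 = x ∧ h 1 = y ∧ IsTautPath h := by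
  obtain ⟨γ⟩ := PathConnectedSpace.joined x y
  obtain ⟨h, hγ, hh⟩ := exists_isTaut_eqOn (B := {0, 1}) (mem_insert 0 {1}) γ.toContinuousMap
  exact ⟨h, (hγ (mem_insert 0 {1})).trans γ.source, (hγ (mem_insert_of_mem 0 rfl)).trans γ.target,
    hh⟩

lemma exists_tautSquare [SimplyConnectedSpace X] (b t l r : C(I, X))
    (hbl : b 0 = l 0) (hbr : b 1 = r 0) (htl : t 0 = l 1) (htr : t 1 = r 1) :
    ∃ F : C(I × I, X), (∀ s, F (s, 0) = b s) ∧ (∀ s, F (s, 1) = t s) ∧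
      (∀ s, F (0, s) = l s) ∧ (∀ s, F (1, s) = r s) ∧ IsTautSquare F := by
  obtain ⟨F₀, hb, ht, hl, hr⟩ := exists_square_filling b t l r hbl hbr htl htr
  obtain ⟨F, hF₀, hF⟩ :=
    exists_isTaut_eqOn (k := (0, 0)) (show _ ∈ squareBoundary from Or.inl rfl) F₀
  refine ⟨F, fun s => (hF₀ ?_).trans (hb s), fun s => (hF₀ ?_).trans (ht s),
    fun s => (hF₀ ?_).trans (hl s), fun s => (hF₀ ?_).trans (hr s), hF⟩ <;>
  simp [squareBoundary]

end Taut

section TautControl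

variable {X : Type*} [MetricSpace X]

lemma exists_eqOn_squareBoundary_mem {Y : Type*} [TopologicalSpace Y] {V : Set Y}
    [SimplyConnectedSpace V] {F : C(I × I, Y)} (hF : ∀ z ∈ squareBoundary, F z ∈ V) :
    ∃ G : C(I × I, Y), EqOn G F squareBoundary ∧ ∀ z, G z ∈ V := by
  have edge (e : I → I × I) (he : Continuous e) (hmem : ∀ s, e s ∈ squareBoundary) :
      ∃ p : C(I, V), ∀ s, (p s : Y) = F (e s) :=
    ⟨⟨fun s => ⟨F (e s), hF _ (hmem s)⟩, by fun_prop⟩, fun _ => rfl⟩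
  obtain ⟨b, hb⟩ := edge (fun s => (s, 0)) (by fun_prop) (by simp [squareBoundary])
  obtain ⟨t, ht⟩ := edge (fun s => (s, 1)) (by fun_prop) (by simp [squareBoundary])
  obtain ⟨l, hl⟩ := edge (fun s => (0, s)) (by fun_prop) (by simp [squareBoundary])
  obtain ⟨r, hr⟩ := edge (fun s => (1, s)) (by fun_prop) (by simp [squareBoundary])
  obtain ⟨G, Gb, Gt, Gl, Gr⟩ := exists_square_filling b t l r
    (Subtype.ext ((hb 0).trans (hl 0).symm))
    (Subtype.ext ((hb 1).trans (hr 0).symm)) (Subtype.ext ((ht 0).trans (hl 1).symm))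
    (Subtype.ext ((ht 1).trans (hr 1).symm))
  refine ⟨⟨fun z => (G z : Y), by fun_prop⟩, ?_, fun z => (G z).2⟩
  rintro ⟨x, y⟩ (rfl | rfl | rfl | rfl)
  · exact (congrArg Subtype.val (Gl y)).trans (hl y)
  · exact (congrArg Subtype.val (Gr y)).trans (hr y)
  · exact (congrArg Subtype.val (Gb x)).trans (hb x)
  · exact (congrArg Subtype.val (Gt x)).trans (ht x)

/-- For some `r` bounding the diameter of `V`, the closed `2 * r`-neighbourhood of `V` lies in `U`.
A taut map whose boundary values extend within `V` then takes values in `U`. -/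
def Confines (U V : Set X) : Prop :=
  ∃ r > 0, (∀ y ∈ V, ∀ z ∈ V, dist y z ≤ r) ∧ ∀ y ∈ V, ∀ z, dist z y ≤ 2 * r → z ∈ U

lemma Confines.subset {U V : Set X} (h : Confines U V) : V ⊆ U := by
  obtain ⟨r, hr, -, hU⟩ := h
  exact fun y hy => hU y hy y (by rw [dist_self]; positivity)

lemma Confines.mem_of_isTaut {K : Type*} [TopologicalSpace K] {U V : Set X} (h : Confines U V)
    {B : Set K} {k : K} (hk : k ∈ B) {F G : C(K, X)} (hF : IsTaut B k F) (hGF : EqOn G F B)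
    (hG : ∀ z, G z ∈ V) (z : K) : F z ∈ U := by
  obtain ⟨r, hr, hV, hU⟩ := h
  have hkV : F k ∈ V := hGF hk ▸ hG k
  exact hU _ hkV _ (hF G hGF r hr (fun z => hV _ (hG z) _ hkV) z)

lemma LocSimplyConnected.exists_confines (hX : LocSimplyConnected X) {x : X} {U : Set X}
    (hU : U ∈ 𝓝 x) : ∃ V ∈ 𝓝 x, SimplyConnectedSpace V ∧ Confines U V := by
  obtain ⟨ε, hε, hεU⟩ := Metric.mem_nhds_iff.1 hU
  obtain ⟨V, hV, hVb, hsc⟩ := hX x (Metric.ball x (ε / 8)) (Metric.ball_mem_nhds _ (by positivity))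
  have hb : ∀ y ∈ V, dist y x < ε / 8 := fun y hy => hVb hy
  refine ⟨V, hV, hsc, ε / 4, by positivity, fun y hy z hz => ?_, fun y hy z hz => hεU ?_⟩
  · linarith [dist_triangle_right y z x, hb y hy, hb z hz]
  · exact Metric.mem_ball.2 (by linarith [dist_triangle z y x, hb y hy])

/-- Taut paths with endpoints in `V`, and taut squares bounded by such paths and by paths in `V`,
stay in `U`. -/
def TautControl (U V : Set X) : Prop :=
  ∃ V' : Set X, V ⊆ V' ∧
    (∀ h : C(I, X), IsTautPath h → h 0 ∈ V → h 1 ∈ V → ∀ t, h t ∈ V') ∧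
    ∀ F : C(I × I, X), IsTautSquare F → (∀ z ∈ squareBoundary, F z ∈ V') → ∀ z, F z ∈ U

lemma LocSimplyConnected.exists_tautControl (hX : LocSimplyConnected X) {x : X} {U : Set X}
    (hU : U ∈ 𝓝 x) : ∃ V ∈ 𝓝 x, TautControl U V := by
  obtain ⟨V', hV', hsc', hUV'⟩ := hX.exists_confines hU
  obtain ⟨V, hV, hsc, hV'V⟩ := hX.exists_confines hV'
  refine ⟨V, hV, V', hV'V.subset, fun h hh h0 h1 t => ?_, fun F hF hFV' z => ?_⟩
  · obtain ⟨γ⟩ := PathConnectedSpace.joined (⟨h 0, h0⟩ : V) ⟨h 1, h1⟩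
    refine hV'V.mem_of_isTaut (mem_insert 0 {1}) hh (G := ⟨fun t => (γ t : X), by fun_prop⟩) ?_
      (fun t => (γ t).2) t
    rintro _ (rfl | rfl)
    · exact congrArg Subtype.val γ.source
    · exact congrArg Subtype.val γ.target
  · obtain ⟨G, hGF, hG⟩ := exists_eqOn_squareBoundary_mem hFV'
    exact hUV'.mem_of_isTaut (show (0, 0) ∈ squareBoundary from Or.inl rfl) hF hGF hG z

end TautControl

section Grid

lemma floor_eq_or {i : ℤ} {x : ℝ} (h0 : i ≤ x) (h1 : x ≤ i + 1) :
    ⌊x⌋ = i ∨ x = i + 1 ∧ ⌊x⌋ = i + 1 := by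
  rcases h1.lt_or_eq with h | rfl
  · exact Or.inl (Int.floor_eq_iff.2 ⟨h0, h⟩)
  · exact Or.inr ⟨rfl, by rw [Int.floor_add_one, Int.floor_intCast]⟩

/-- The affine parametrization, by the unit square, of the square with lower left corner `δ • c`
of the grid of mesh `δ` in the plane. -/
def gridCell (δ : ℝ) (c : ℤ × ℤ) : C(I × I, ℝ × ℝ) where
  toFun s := (δ * (c.1 + s.1), δ * (c.2 + s.2))

/-- The closed square with lower left corner `δ • c` of the grid of mesh `δ`. -/
def gridSq (δ : ℝ) (c : ℤ × ℤ) : Set (ℝ × ℝ) := range (gridCell δ c)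

lemma mem_gridSq_one {c : ℤ × ℤ} {z : ℝ × ℝ} :
    z ∈ gridSq 1 c ↔ z ∈ Icc (c.1 : ℝ) (c.1 + 1) ×ˢ Icc (c.2 : ℝ) (c.2 + 1) := by
  constructor
  · rintro ⟨s, rfl⟩
    simp [gridCell, s.1.2.1, s.1.2.2, s.2.2.1, s.2.2.2]
  · rintro ⟨⟨h1, h2⟩, h3, h4⟩
    exact ⟨(⟨z.1 - c.1, by linarith, by linarith⟩, ⟨z.2 - c.2, by linarith, by linarith⟩),
      by simp [gridCell]⟩

lemma mem_gridSq_iff {δ : ℝ} (hδ : 0 < δ) {c : ℤ × ℤ} {z : ℝ × ℝ} :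
    z ∈ gridSq δ c ↔ δ⁻¹ • z ∈ gridSq 1 c := by
  have h (s : I × I) : gridCell δ c s = δ • gridCell 1 c s := by simp [gridCell]
  simp only [gridSq, mem_range, h, ← eq_inv_smul_iff₀ hδ.ne']

lemma mem_gridSq_floor (z : ℝ × ℝ) : z ∈ gridSq 1 (⌊z.1⌋, ⌊z.2⌋) :=
  mem_gridSq_one.2 ⟨⟨Int.floor_le _, (Int.lt_floor_add_one _).le⟩,
    Int.floor_le _, (Int.lt_floor_add_one _).le⟩

lemma exists_mem_gridSq {δ : ℝ} (hδ : 0 < δ) (z : ℝ × ℝ) : ∃ c, z ∈ gridSq δ c :=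
  ⟨_, (mem_gridSq_iff hδ).2 (mem_gridSq_floor _)⟩

lemma dist_le_of_mem_gridSq {δ : ℝ} (hδ : 0 < δ) {c : ℤ × ℤ} {z w : ℝ × ℝ}
    (hz : z ∈ gridSq δ c) (hw : w ∈ gridSq δ c) : dist z w ≤ δ := by
  rw [mem_gridSq_iff hδ, mem_gridSq_one] at hz hw
  have h : dist (δ⁻¹ • z) (δ⁻¹ • w) ≤ 1 := by
    obtain ⟨⟨h1, h2⟩, h3, h4⟩ := hz
    obtain ⟨⟨k1, k2⟩, k3, k4⟩ := hw
    rw [Prod.dist_eq, max_le_iff, Real.dist_eq, Real.dist_eq, abs_le, abs_le]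
    refine ⟨⟨?_, ?_⟩, ?_, ?_⟩ <;> linarith
  rwa [dist_smul₀, norm_inv, Real.norm_of_nonneg hδ.le, inv_mul_le_iff₀ hδ, mul_one] at h

lemma isClosed_gridSq (δ : ℝ) (c : ℤ × ℤ) : IsClosed (gridSq δ c) :=
  (isCompact_range (gridCell δ c).continuous).isClosed

lemma locallyFinite_gridSq : LocallyFinite (gridSq 1) := by
  intro z
  refine ⟨Metric.ball z 1, Metric.ball_mem_nhds z one_pos,
    (finite_Icc ((⌊z.1⌋ - 2, ⌊z.2⌋ - 2) : ℤ × ℤ) (⌊z.1⌋ + 2, ⌊z.2⌋ + 2)).subset ?_⟩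
  rintro ⟨i, j⟩ ⟨w, hw, hwz⟩
  obtain ⟨⟨h1, h2⟩, h3, h4⟩ := mem_gridSq_one.1 hw
  obtain ⟨⟨k1, k2⟩, k3, k4⟩ := mem_gridSq_one.1 (mem_gridSq_floor z)
  rw [Metric.mem_ball, Prod.dist_eq, max_lt_iff, Real.dist_eq, Real.dist_eq, abs_lt, abs_lt] at hwz
  obtain ⟨⟨w1, w2⟩, w3, w4⟩ := hwz
  refine ⟨⟨?_, ?_⟩, ?_, ?_⟩ <;> simp only at * <;> rify <;> linarith

section Glue

variable {Y : Type*} {F : ℤ × ℤ → I × I → Y}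

/-- The map on the plane given on the unit grid square `c` by `F c`. -/
def gridGlue (F : ℤ × ℤ → I × I → Y) (z : ℝ × ℝ) : Y :=
  F (⌊z.1⌋, ⌊z.2⌋) (projIcc 0 1 zero_le_one (z.1 - ⌊z.1⌋), projIcc 0 1 zero_le_one (z.2 - ⌊z.2⌋))

lemma gridGlue_eq (hv : ∀ c s, F c (s, 1) = F (c + (0, 1)) (s, 0))
    (hh : ∀ c s, F c (1, s) = F (c + (1, 0)) (0, s)) {c : ℤ × ℤ} {z : ℝ × ℝ}
    (hz : z ∈ gridSq 1 c) : gridGlue F z =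
      F c (projIcc 0 1 zero_le_one (z.1 - c.1), projIcc 0 1 zero_le_one (z.2 - c.2)) := by
  obtain ⟨i, j⟩ := c
  obtain ⟨x, y⟩ := z
  obtain ⟨⟨hx0, hx1⟩, hy0, hy1⟩ := mem_gridSq_one.1 hz
  have hh' (s : I) : F (i + 1, j) (0, s) = F (i, j) (1, s) := by simpa using (hh (i, j) s).symm
  have hv' (i : ℤ) (s : I) : F (i, j + 1) (s, 0) = F (i, j) (s, 1) := by
    simpa using (hv (i, j) s).symm
  unfold gridGlue
  rcases floor_eq_or hx0 hx1 with hi | ⟨rfl, hi⟩ <;>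
    rcases floor_eq_or hy0 hy1 with hj | ⟨rfl, hj⟩ <;>
    simp [hi, hj, hh', hv']

lemma continuous_gridGlue [TopologicalSpace Y] (hF : ∀ c, Continuous (F c))
    (hv : ∀ c s, F c (s, 1) = F (c + (0, 1)) (s, 0))
    (hh : ∀ c s, F c (1, s) = F (c + (1, 0)) (0, s)) : Continuous (gridGlue F) :=
  locallyFinite_gridSq.continuous
    (eq_univ_of_forall fun z => mem_iUnion.2 ⟨_, mem_gridSq_floor z⟩) (isClosed_gridSq 1)
    fun c => (show Continuous _ by fun_prop).continuousOn.congr fun _ hz => gridGlue_eq hv hh hz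

lemma exists_comp_gridCell_eq {δ : ℝ} (hδ : 0 < δ) [TopologicalSpace Y] (F : ℤ × ℤ → C(I × I, Y))
    (hv : ∀ c s, F c (s, 1) = F (c + (0, 1)) (s, 0))
    (hh : ∀ c s, F c (1, s) = F (c + (1, 0)) (0, s)) :
    ∃ P : C(ℝ × ℝ, Y), ∀ c s, P (gridCell δ c s) = F c s := by
  have hc : Continuous (gridGlue fun c => F c) :=
    continuous_gridGlue (fun c => (F c).continuous) hv hh
  refine ⟨⟨fun z => gridGlue (fun c => F c) (δ⁻¹ • z), by fun_prop⟩, fun c s => ?_⟩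
  have hs : δ⁻¹ • gridCell δ c s = gridCell 1 c s := by simp [gridCell, hδ.ne']
  have h := gridGlue_eq hv hh (mem_range_self (f := gridCell 1 c) s)
  rw [← hs] at h
  refine h.trans ?_
  simp [gridCell, hδ.ne', projIcc_val]

end Glue

/-- The vertex `δ • c` of the grid of mesh `δ`. -/
def gridVertex (δ : ℝ) (c : ℤ × ℤ) : ℝ × ℝ := (δ * c.1, δ * c.2)

/-- The affine parametrization, by the unit interval, of the segment from the grid vertex `δ • c` to
the grid vertex `δ • (c + e)`. -/
def gridEdge (δ : ℝ) (e c : ℤ × ℤ) : C(I, ℝ × ℝ) where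
  toFun t := (δ * (c.1 + t * e.1), δ * (c.2 + t * e.2))

/-- The union of the squares of the grid of mesh `δ` with lower left corner in `δ • 𝒞`. -/
def gridUnion (δ : ℝ) (𝒞 : Set (ℤ × ℤ)) : Set (ℝ × ℝ) := ⋃ c ∈ 𝒞, gridSq δ c

lemma gridSq_subset_gridUnion {δ : ℝ} {𝒞 : Set (ℤ × ℤ)} {c : ℤ × ℤ} (hc : c ∈ 𝒞) :
    gridSq δ c ⊆ gridUnion δ 𝒞 :=
  subset_biUnion_of_mem hc

lemma gridEdge_zero (δ : ℝ) (e c : ℤ × ℤ) : gridEdge δ e c 0 = gridVertex δ c := by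
  simp [gridEdge, gridVertex]

lemma gridEdge_one (δ : ℝ) (e c : ℤ × ℤ) : gridEdge δ e c 1 = gridVertex δ (c + e) := by
  simp [gridEdge, gridVertex]

lemma gridCell_bottom (δ : ℝ) (c : ℤ × ℤ) (s : I) :
    gridCell δ c (s, 0) = gridEdge δ (1, 0) c s := by
  simp [gridEdge, gridCell]

lemma gridCell_top (δ : ℝ) (c : ℤ × ℤ) (s : I) :
    gridCell δ c (s, 1) = gridEdge δ (1, 0) (c + (0, 1)) s := by
  simp [gridEdge, gridCell]

lemma gridCell_left (δ : ℝ) (c : ℤ × ℤ) (s : I) :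
    gridCell δ c (0, s) = gridEdge δ (0, 1) c s := by
  simp [gridEdge, gridCell]

lemma gridCell_right (δ : ℝ) (c : ℤ × ℤ) (s : I) :
    gridCell δ c (1, s) = gridEdge δ (0, 1) (c + (1, 0)) s := by
  simp [gridEdge, gridCell]

variable {X : Type*} [MetricSpace X]

/-- `P₁` agrees with `P₀` on the grid squares in `𝒞`, takes the values prescribed by `val` at the
vertices away from them, and is taut on all edges and squares not covered by them. -/
structure IsTautRefilling (δ : ℝ) (𝒞 : Set (ℤ × ℤ)) (val : ℝ × ℝ → X) (P₀ P₁ : C(ℝ × ℝ, X)) :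
    Prop where
  eqOn : EqOn P₁ P₀ (gridUnion δ 𝒞)
  vertex : ∀ c, gridVertex δ c ∉ gridUnion δ 𝒞 → P₁ (gridVertex δ c) = val (gridVertex δ c)
  edge : ∀ e ∈ ({(1, 0), (0, 1)} : Set (ℤ × ℤ)), ∀ c, ¬range (gridEdge δ e c) ⊆ gridUnion δ 𝒞 →
    IsTautPath (P₁.comp (gridEdge δ e c))
  face : ∀ c ∉ 𝒞, IsTautSquare (P₁.comp (gridCell δ c))

section Existence

variable {δ : ℝ} {𝒞 : Set (ℤ × ℤ)} {P₀ : C(ℝ × ℝ, X)}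

lemma exists_gridEdge_refilling [PathConnectedSpace X] (val : ℝ × ℝ → X) (e c : ℤ × ℤ) :
    ∃ h : C(I, X), h 0 = piecewise (gridUnion δ 𝒞) P₀ val (gridVertex δ c) ∧
      h 1 = piecewise (gridUnion δ 𝒞) P₀ val (gridVertex δ (c + e)) ∧
      (range (gridEdge δ e c) ⊆ gridUnion δ 𝒞 → h = P₀.comp (gridEdge δ e c)) ∧
      (¬range (gridEdge δ e c) ⊆ gridUnion δ 𝒞 → IsTautPath h) := by
  by_cases hc : range (gridEdge δ e c) ⊆ gridUnion δ 𝒞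
  · refine ⟨P₀.comp (gridEdge δ e c), ?_, ?_, fun _ => rfl, fun h => absurd hc h⟩
    · rw [← gridEdge_zero δ e, piecewise_eq_of_mem _ _ _ (hc ⟨0, rfl⟩), ContinuousMap.comp_apply]
    · rw [← gridEdge_one, piecewise_eq_of_mem _ _ _ (hc ⟨1, rfl⟩), ContinuousMap.comp_apply]
  · obtain ⟨h, h0, h1, hh⟩ := exists_tautPath (piecewise (gridUnion δ 𝒞) P₀ val (gridVertex δ c))
      (piecewise (gridUnion δ 𝒞) P₀ val (gridVertex δ (c + e)))
    exact ⟨h, h0, h1, fun H => absurd H hc, fun _ => hh⟩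

lemma exists_gridCell_refilling [SimplyConnectedSpace X] {h : ℤ × ℤ → ℤ × ℤ → C(I, X)}
    {w : ℤ × ℤ → X} (h0 : ∀ e c, h e c 0 = w c) (h1 : ∀ e c, h e c 1 = w (c + e))
    (hK : ∀ e c, range (gridEdge δ e c) ⊆ gridUnion δ 𝒞 → h e c = P₀.comp (gridEdge δ e c))
    (c : ℤ × ℤ) :
    ∃ F : C(I × I, X), (∀ s, F (s, 0) = h (1, 0) c s) ∧
      (∀ s, F (s, 1) = h (1, 0) (c + (0, 1)) s) ∧ (∀ s, F (0, s) = h (0, 1) c s) ∧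
      (∀ s, F (1, s) = h (0, 1) (c + (1, 0)) s) ∧
      (c ∈ 𝒞 → F = P₀.comp (gridCell δ c)) ∧ (c ∉ 𝒞 → IsTautSquare F) := by
  by_cases hc : c ∈ 𝒞
  · have edge (e c' : ℤ × ℤ) (b : I → I × I) (hb : ∀ s, gridCell δ c (b s) = gridEdge δ e c' s)
        (s : I) : P₀.comp (gridCell δ c) (b s) = h e c' s := by
      rw [hK e c', ContinuousMap.comp_apply, ContinuousMap.comp_apply, hb]
      rintro _ ⟨s, rfl⟩
      exact gridSq_subset_gridUnion hc ⟨b s, hb s⟩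
    exact ⟨P₀.comp (gridCell δ c), edge _ _ _ (gridCell_bottom δ c), edge _ _ _ (gridCell_top δ c),
      edge _ _ _ (gridCell_left δ c), edge _ _ _ (gridCell_right δ c), fun _ => rfl,
      fun H => absurd hc H⟩
  · obtain ⟨F, hb, ht, hl, hr, hF⟩ := exists_tautSquare (h (1, 0) c) (h (1, 0) (c + (0, 1)))
      (h (0, 1) c) (h (0, 1) (c + (1, 0))) (by rw [h0, h0]) (by rw [h1, h0]) (by rw [h0, h1])
      (by rw [h1, h1, add_right_comm])
    exact ⟨F, hb, ht, hl, hr, fun H => absurd H hc, fun _ => hF⟩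

lemma exists_isTautRefilling [SimplyConnectedSpace X] (hδ : 0 < δ) (𝒞 : Set (ℤ × ℤ))
    (val : ℝ × ℝ → X) (P₀ : C(ℝ × ℝ, X)) :
    ∃ P₁ : C(ℝ × ℝ, X), IsTautRefilling δ 𝒞 val P₀ P₁ := by
  choose h h0 h1 hK hT using exists_gridEdge_refilling (δ := δ) (𝒞 := 𝒞) (P₀ := P₀) val
  choose F Fb Ft Fl Fr FK FT using exists_gridCell_refilling h0 h1 hK
  obtain ⟨P₁, hP₁⟩ := exists_comp_gridCell_eq hδ F (fun c s => by rw [Ft, Fb])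
    (fun c s => by rw [Fr, Fl])
  refine ⟨P₁, fun z hz => ?_, fun c hc => ?_, fun e he c hc => ?_, fun c hc => ?_⟩
  · obtain ⟨c, hc, s, rfl⟩ := mem_iUnion₂.1 hz
    rw [hP₁, FK c hc, ContinuousMap.comp_apply]
  · rw [← gridEdge_zero δ (1, 0), ← gridCell_bottom, hP₁, Fb, h0, piecewise_eq_of_notMem _ _ _ hc,
      gridCell_bottom, gridEdge_zero]
  · have : P₁.comp (gridEdge δ e c) = h e c := by
      ext s
      rcases he with rfl | rfl
      · rw [ContinuousMap.comp_apply, ← gridCell_bottom, hP₁, Fb]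
      · rw [ContinuousMap.comp_apply, ← gridCell_left, hP₁, Fl]
    exact this ▸ hT e c hc
  · have : P₁.comp (gridCell δ c) = F c := ContinuousMap.ext (hP₁ c)
    exact this ▸ FT c hc

end Existence

lemma IsTautRefilling.mem_of_tautControl {δ : ℝ} {𝒞 : Set (ℤ × ℤ)} {val : ℝ × ℝ → X}
    {P₀ P₁ : C(ℝ × ℝ, X)} (hP₁ : IsTautRefilling δ 𝒞 val P₀ P₁) {U V : Set X}
    (hUV : TautControl U V) {c : ℤ × ℤ} (hc : c ∉ 𝒞) (hval : ∀ z ∈ gridSq δ c, val z ∈ V)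
    (hP₀ : ∀ z ∈ gridSq δ c ∩ gridUnion δ 𝒞, P₀ z ∈ V) : ∀ z ∈ gridSq δ c, P₁ z ∈ U := by
  obtain ⟨V', hVV', hpath, hsq⟩ := hUV
  have hK : ∀ z ∈ gridSq δ c ∩ gridUnion δ 𝒞, P₁ z ∈ V := fun z hz => hP₁.eqOn hz.2 ▸ hP₀ z hz
  have hvertex (c' : ℤ × ℤ) (hc' : gridVertex δ c' ∈ gridSq δ c) : P₁ (gridVertex δ c') ∈ V := by
    by_cases h : gridVertex δ c' ∈ gridUnion δ 𝒞
    · exact hK _ ⟨hc', h⟩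
    · exact hP₁.vertex c' h ▸ hval _ hc'
  have hedge (e c' : ℤ × ℤ) (he : e ∈ ({(1, 0), (0, 1)} : Set (ℤ × ℤ))) (b : I → I × I)
      (hb : ∀ t, gridCell δ c (b t) = gridEdge δ e c' t) (t : I) :
      P₁ (gridCell δ c (b t)) ∈ V' := by
    have hsub (t : I) : gridEdge δ e c' t ∈ gridSq δ c := ⟨b t, hb t⟩
    rw [hb]
    by_cases h : range (gridEdge δ e c') ⊆ gridUnion δ 𝒞
    · exact hVV' (hK _ ⟨hsub t, h ⟨t, rfl⟩⟩)
    · refine hpath _ (hP₁.edge e he c' h) ?_ ?_ t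
      · rw [ContinuousMap.comp_apply, gridEdge_zero]
        exact hvertex c' (gridEdge_zero δ e c' ▸ hsub 0)
      · rw [ContinuousMap.comp_apply, gridEdge_one]
        exact hvertex (c' + e) (gridEdge_one δ e c' ▸ hsub 1)
  rintro _ ⟨z, rfl⟩
  refine hsq _ (hP₁.face c hc) ?_ z
  rintro ⟨x, y⟩ (rfl | rfl | rfl | rfl)
  · exact hedge _ _ (by simp) _ (gridCell_left δ c) y
  · exact hedge _ _ (by simp) _ (gridCell_right δ c) y
  · exact hedge _ _ (by simp) _ (gridCell_bottom δ c) x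
  · exact hedge _ _ (by simp) _ (gridCell_top δ c) x

end Grid

section PlanarExtension

open Metric

/-- The mesh `2⁻ᵏ` of the `k`-th dyadic grid. -/
def mesh (k : ℕ) : ℝ := (1 / 2) ^ k

lemma mesh_pos (k : ℕ) : 0 < mesh k := by unfold mesh; positivity

lemma mesh_eq_two_mul (k : ℕ) : mesh k = 2 * mesh (k + 1) := by
  rw [mesh, mesh, pow_succ]
  ring

lemma exists_mesh_lt {ε : ℝ} (hε : 0 < ε) : ∃ k, mesh k < ε :=
  exists_pow_lt_of_lt_one hε one_half_lt_one

/-- The squares of the `k`-th dyadic grid at distance at least four times their side from `A`. -/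
def farCells (A : Set (ℝ × ℝ)) (k : ℕ) : Set (ℤ × ℤ) :=
  {c | ∀ z ∈ gridSq (mesh k) c, 4 * mesh k ≤ infDist z A}

/-- The union of the squares in `farCells A k`. -/
def farSet (A : Set (ℝ × ℝ)) (k : ℕ) : Set (ℝ × ℝ) := gridUnion (mesh k) (farCells A k)

section FarSet

variable {A : Set (ℝ × ℝ)} {k : ℕ} {z : ℝ × ℝ}

lemma le_infDist_of_mem_farSet (hz : z ∈ farSet A k) : 4 * mesh k ≤ infDist z A := by
  obtain ⟨c, hc, hzc⟩ := mem_iUnion₂.1 hz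
  exact hc z hzc

lemma mem_farSet_of_le_infDist (hz : 5 * mesh k ≤ infDist z A) : z ∈ farSet A k := by
  obtain ⟨c, hc⟩ := exists_mem_gridSq (mesh_pos k) z
  refine gridSq_subset_gridUnion (fun w hw => ?_) hc
  linarith [infDist_le_infDist_add_dist (x := z) (y := w) (s := A),
    dist_le_of_mem_gridSq (mesh_pos k) hc hw]

lemma monotone_farSet (A : Set (ℝ × ℝ)) : Monotone (farSet A) :=
  monotone_nat_of_le_succ fun k _ hz => mem_farSet_of_le_infDist <| by
    linarith [le_infDist_of_mem_farSet hz, mesh_eq_two_mul k, mesh_pos (k + 1)]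

lemma notMem_of_mem_farSet (hz : z ∈ farSet A k) : z ∉ A := fun hzA => by
  linarith [le_infDist_of_mem_farSet hz, infDist_zero_of_mem hzA, mesh_pos k]

lemma exists_farSet_mem_nhds (hA : IsClosed A) (hne : A.Nonempty) (hz : z ∉ A) :
    ∃ k, farSet A k ∈ 𝓝 z := by
  have hpos : 0 < infDist z A := (hA.notMem_iff_infDist_pos hne).1 hz
  obtain ⟨k, hk⟩ := exists_mesh_lt (show 0 < infDist z A / 5 by positivity)
  refine ⟨k, ?_⟩
  filter_upwards [(continuous_infDist_pt A).continuousAt.eventually_const_lt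
    (show 5 * mesh k < infDist z A by linarith)] with w hw
  exact mem_farSet_of_le_infDist hw.le

lemma exists_mem_farSet_diff (hA : IsClosed A) (hne : A.Nonempty) (hz : z ∉ A)
    (hz1 : infDist z A < 1) : ∃ k, z ∈ farSet A (k + 2) ∧ z ∉ farSet A (k + 1) := by
  have hex : ∃ n, z ∈ farSet A n :=
    (exists_farSet_mem_nhds hA hne hz).imp fun _ => mem_of_mem_nhds
  have hspec := Nat.find_spec hex
  obtain ⟨k, hk⟩ : ∃ k, Nat.find hex = k + 2 := by
    refine Nat.exists_eq_add_of_le' (Nat.succ_le_of_lt (lt_of_not_ge fun h => ?_))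
    have := le_infDist_of_mem_farSet (monotone_farSet A h hspec)
    norm_num [mesh] at this
    linarith
  exact ⟨k, hk ▸ hspec, Nat.find_min hex (by lia)⟩

end FarSet

variable {X : Type*} [MetricSpace X]

/-- A sequence of maps on the plane in which each one refills its predecessor on the next dyadic
grid, keeping it on the squares far from `A`. -/
def IsTautTower (A : Set (ℝ × ℝ)) (val : ℝ × ℝ → X) (S : ℕ → C(ℝ × ℝ, X)) : Prop :=
  ∀ k, IsTautRefilling (mesh k) (farCells A k) val (S k) (S (k + 1))

lemma exists_isTautTower [SimplyConnectedSpace X] (A : Set (ℝ × ℝ)) (val : ℝ × ℝ → X) :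
    ∃ S, IsTautTower A val S := by
  choose T hT using fun k => exists_isTautRefilling (mesh_pos k) (farCells A k) val
  let S : ℕ → C(ℝ × ℝ, X) := fun k => Nat.rec (ContinuousMap.const _ (val 0)) (fun k P => T k P) k
  exact ⟨S, fun k => hT k (S k)⟩

namespace IsTautTower

variable {A : Set (ℝ × ℝ)} {val : ℝ × ℝ → X} {S : ℕ → C(ℝ × ℝ, X)} {U V V' : Set X}

lemma eqOn_farSet (hS : IsTautTower A val S) {k m : ℕ} (hkm : k ≤ m) :
    EqOn (S m) (S k) (farSet A k) := by
  induction m, hkm using Nat.le_induction with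
  | base => exact eqOn_refl _ _
  | succ m hkm ih => exact ((hS m).eqOn.mono (monotone_farSet A hkm)).trans ih

lemma exists_limit (hS : IsTautTower A val S) (φ : ℝ × ℝ → X) :
    ∃ P : ℝ × ℝ → X, (∀ k, EqOn P (S k) (farSet A k)) ∧ EqOn P φ A := by
  refine ⟨fun z => if h : ∃ k, z ∈ farSet A k then S h.choose z else φ z, fun k z hz => ?_,
    fun z hz => dif_neg fun ⟨k, hk⟩ => notMem_of_mem_farSet hk hz⟩
  have h : ∃ k, z ∈ farSet A k := ⟨k, hz⟩
  simp only [dif_pos h]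
  rw [← hS.eqOn_farSet (le_max_left h.choose k) h.choose_spec,
    hS.eqOn_farSet (le_max_right h.choose k) hz]

lemma mem_of_tautControl (hS : IsTautTower A val S) (hUV : TautControl U V) {k : ℕ} {z : ℝ × ℝ}
    (hz : z ∉ farSet A k) (hval : ∀ q, dist q z ≤ mesh k → val q ∈ V)
    (hfar : ∀ q ∈ farSet A k, dist q z ≤ mesh k → S k q ∈ V) : S (k + 1) z ∈ U := by
  obtain ⟨c, hc⟩ := exists_mem_gridSq (mesh_pos k) z
  have hdist (q) (hq : q ∈ gridSq (mesh k) c) : dist q z ≤ mesh k :=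
    dist_le_of_mem_gridSq (mesh_pos k) hq hc
  exact (hS k).mem_of_tautControl hUV (fun h => hz (gridSq_subset_gridUnion h hc))
    (fun q hq => hval q (hdist q hq)) (fun q hq => hfar q hq.2 (hdist q hq.1)) z hc

lemma mem_of_tautControl_of_tautControl (hS : IsTautTower A val S) (hUV : TautControl U V)
    (hVV' : TautControl V V') {k : ℕ} {z : ℝ × ℝ} (hz : z ∉ farSet A (k + 1))
    (hval : ∀ q, dist q z ≤ 3 * mesh (k + 1) → val q ∈ V ∩ V') : S (k + 2) z ∈ U := by
  have hmesh := mesh_eq_two_mul k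
  have hpos := mesh_pos (k + 1)
  have hz5 : infDist z A < 5 * mesh (k + 1) := lt_of_not_ge fun h => hz (mem_farSet_of_le_infDist h)
  refine hS.mem_of_tautControl hUV hz (fun q hq => (hval q (by linarith)).1) fun w _ hwz => ?_
  have hw : infDist w A < 3 * mesh k := by
    linarith [infDist_le_infDist_add_dist (x := w) (y := z) (s := A)]
  refine hS.mem_of_tautControl hVV' (fun h => ?_) (fun q hq => (hval q ?_).2) fun q hq hqw => ?_
  · linarith [le_infDist_of_mem_farSet h]
  · linarith [dist_triangle q w z]
  -- The squares on which `S k` is kept are too far away to meet the square of `w`.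
  · linarith [le_infDist_of_mem_farSet hq, infDist_le_infDist_add_dist (x := q) (y := w) (s := A)]

variable {φ : ℝ × ℝ → X} {ν : ℝ × ℝ → ℝ × ℝ}

lemma continuousAt_limit (hS : IsTautTower A (φ ∘ ν) S) (hX : LocSimplyConnected X)
    (hA : IsClosed A) (hφ : ContinuousOn φ A) (hνA : ∀ z, ν z ∈ A)
    (hν : ∀ z, infDist z A = dist z (ν z)) {P : ℝ × ℝ → X} (hPS : ∀ k, EqOn P (S k) (farSet A k))
    (hPφ : EqOn P φ A) {a : ℝ × ℝ} (ha : a ∈ A) : ContinuousAt P a := by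
  intro U hU
  rw [hPφ ha] at hU
  obtain ⟨V, hV, hUV⟩ := hX.exists_tautControl hU
  obtain ⟨V', hV', hVV'⟩ := hX.exists_tautControl hV
  obtain ⟨ε, hε, hφε⟩ := mem_nhdsWithin_iff.1
    (hφ a ha (Filter.inter_mem hU (Filter.inter_mem hV hV')))
  refine mem_nhds_iff.2 ⟨min (ε / 5) 1, by positivity, fun z hz => ?_⟩
  obtain ⟨hzε, hz1⟩ := lt_min_iff.1 (mem_ball.1 hz)
  by_cases hzA : z ∈ A
  · rw [mem_preimage, hPφ hzA]
    exact (hφε ⟨show dist z a < ε by linarith, hzA⟩).1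
  have hza : infDist z A ≤ dist z a := infDist_le_dist_of_mem ha
  obtain ⟨k, hk, hk'⟩ := exists_mem_farSet_diff hA ⟨a, ha⟩ hzA (hza.trans_lt hz1)
  rw [mem_preimage, hPS _ hk]
  refine hS.mem_of_tautControl_of_tautControl hUV hVV' hk' fun q hq =>
    (hφε ⟨mem_ball.2 ?_, hνA q⟩).2
  have hmesh : mesh (k + 1) = 2 * mesh (k + 2) := mesh_eq_two_mul (k + 1)
  have hzk := le_infDist_of_mem_farSet hk
  have := hν q ▸ infDist_le_infDist_add_dist (x := q) (y := z) (s := A)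
  linarith [dist_triangle4 (ν q) q z a, dist_comm (ν q) q]

end IsTautTower

/-- The extension is a limit of maps `S k` on the plane: the `k`-th map is settled on the dyadic
squares of side `2⁻ᵏ` far from `A`, and near `A` its values at grid vertices are those of `φ` at
nearest points. -/
theorem exists_planar_extension [SimplyConnectedSpace X] (hX : LocSimplyConnected X)
    {A : Set (ℝ × ℝ)} (hA : IsClosed A) {φ : ℝ × ℝ → X} (hφ : ContinuousOn φ A) :
    ∃ P : C(ℝ × ℝ, X), EqOn P φ A := by
  obtain rfl | hne := A.eq_empty_or_nonempty
  · exact ⟨ContinuousMap.const _ (φ 0), eqOn_empty _ _⟩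
  choose ν hνA hν using hA.exists_infDist_eq_dist hne
  obtain ⟨S, hS⟩ := exists_isTautTower A (φ ∘ ν)
  obtain ⟨P, hPS, hPφ⟩ := hS.exists_limit φ
  refine ⟨⟨P, continuous_iff_continuousAt.2 fun a => ?_⟩, hPφ⟩
  by_cases ha : a ∈ A
  · exact hS.continuousAt_limit hX hA hφ hνA hν hPS hPφ ha
  · obtain ⟨k, hk⟩ := exists_farSet_mem_nhds hA hne ha
    exact (S k).continuous.continuousAt.congr ((hPS k).symm.eventuallyEq_of_mem hk)

end PlanarExtension

section Lamination

/-- The path `p` takes equal values at the two endpoints of each leaf `z ∈ R`, a leaf being encoded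
as the pair of its endpoints, and any two crossing leaves contribute the same value. -/
structure RespectsLeaves {X : Type*} (p : ℝ → X) (R : Set (ℝ × ℝ)) : Prop where
  le : ∀ z ∈ R, z.1 ≤ z.2
  eq : ∀ z ∈ R, p z.1 = p z.2
  crossing : ∀ z ∈ R, ∀ w ∈ R, w.1 < z.1 → z.1 < w.2 → w.2 < z.2 → p z.1 = p w.2

/-- The pairs of a leaf in `R` and a parameter below it. -/
def leafPoints (R : Set (ℝ × ℝ)) : Set ((ℝ × ℝ) × ℝ) := {q | q.1 ∈ R ∧ q.2 ∈ Icc q.1.1 q.1.2}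

/-- The union of the vertical legs from `(s, s)` to `(s, s')`, over the leaves `(s, s') ∈ R`. -/
def verticalLegs (R : Set (ℝ × ℝ)) : Set (ℝ × ℝ) := (fun q => (q.1.1, q.2)) '' leafPoints R

/-- The union of the horizontal legs from `(s, s')` to `(s', s')`, over the leaves `(s, s') ∈ R`. -/
def horizontalLegs (R : Set (ℝ × ℝ)) : Set (ℝ × ℝ) := (fun q => (q.2, q.1.2)) '' leafPoints R

lemma isCompact_leafPoints {R : Set (ℝ × ℝ)} (hR : IsClosed R) {a c : ℝ}
    (hRac : R ⊆ Icc a c ×ˢ Icc a c) : IsCompact (leafPoints R) := by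
  have hclosed : IsClosed (leafPoints R) := by
    refine (hR.preimage continuous_fst).and (.and (isClosed_le ?_ ?_) (isClosed_le ?_ ?_)) <;>
      fun_prop
  have hcompact : IsCompact ((Icc a c ×ˢ Icc a c) ×ˢ Icc a c) :=
    (isCompact_Icc.prod isCompact_Icc).prod isCompact_Icc
  refine hcompact.of_isClosed_subset hclosed fun q ⟨hqR, hq⟩ => ?_
  have hqac := hRac hqR
  exact ⟨hqac, hqac.1.1.trans hq.1, hq.2.trans hqac.2.2⟩

variable {X : Type*} {p : ℝ → X} {R : Set (ℝ × ℝ)}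

lemma RespectsLeaves.closure_leaves [TopologicalSpace X] [T2Space X] (h : RespectsLeaves p R)
    (hp : Continuous p) : RespectsLeaves p (closure R) where
  le := closure_minimal h.le (isClosed_le continuous_fst continuous_snd)
  eq := closure_minimal h.eq (isClosed_eq (by fun_prop) (by fun_prop))
  crossing z hz w hw hwz hzw hwz' := by
    by_contra hne
    have hmem : (z, w) ∈ closure (R ×ˢ R) := by
      rw [closure_prod_eq]
      exact ⟨hz, hw⟩
    have hopen : IsOpen {q : (ℝ × ℝ) × (ℝ × ℝ) |
        q.2.1 < q.1.1 ∧ q.1.1 < q.2.2 ∧ q.2.2 < q.1.2 ∧ p q.1.1 ≠ p q.2.2} := by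
      refine .and (isOpen_lt ?_ ?_) (.and (isOpen_lt ?_ ?_)
        (.and (isOpen_lt ?_ ?_) (isOpen_ne_fun ?_ ?_))) <;> fun_prop
    obtain ⟨q, ⟨h1, h2, h3, h4⟩, hq1, hq2⟩ := mem_closure_iff.1 hmem _ hopen ⟨hwz, hzw, hwz', hne⟩
    exact h4 (h.crossing _ hq1 _ hq2 h1 h2 h3)

lemma RespectsLeaves.eq_of_mem_legs (h : RespectsLeaves p R) {z : ℝ × ℝ}
    (hv : z ∈ verticalLegs R) (hh : z ∈ horizontalLegs R) : p z.1 = p z.2 := by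
  obtain ⟨⟨z₁, y⟩, ⟨hz₁, h1, h2⟩, rfl⟩ := hv
  obtain ⟨⟨z₂, x⟩, ⟨hz₂, h3, -⟩, heq⟩ := hh
  obtain ⟨rfl, rfl⟩ : x = z₁.1 ∧ z₂.2 = y := Prod.mk.inj heq
  change p z₁.1 = p z₂.2
  obtain h1 | h1 := h1.eq_or_lt
  · exact congrArg p h1
  obtain h2 | h2 := h2.eq_or_lt
  · exact (h.eq _ hz₁).trans (congrArg p h2.symm)
  obtain h3 | h3 := h3.eq_or_lt
  · exact (congrArg p h3.symm).trans (h.eq _ hz₂)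
  · exact h.crossing _ hz₁ _ hz₂ h3 h1 h2

lemma RespectsLeaves.exists_extension [MetricSpace X] [SimplyConnectedSpace X]
    (hX : LocSimplyConnected X) (h : RespectsLeaves p R) (hp : Continuous p) {a c : ℝ}
    (hRac : R ⊆ Icc a c ×ˢ Icc a c) :
    ∃ P : C(ℝ × ℝ, X), ∀ z ∈ R, ∀ t ∈ Icc z.1 z.2, P (z.1, t) = p z.1 ∧ P (t, z.2) = p z.1 := by
  have hcpt : IsCompact (leafPoints (closure R)) :=
    isCompact_leafPoints isClosed_closure (closure_minimal hRac (isClosed_Icc.prod isClosed_Icc))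
  have hv : IsClosed (verticalLegs (closure R)) := (hcpt.image (by fun_prop)).isClosed
  have hh : IsClosed (horizontalLegs (closure R)) := (hcpt.image (by fun_prop)).isClosed
  let φ : ℝ × ℝ → X := (verticalLegs (closure R)).piecewise (fun z => p z.1) (fun z => p z.2)
  have hφv : EqOn φ (fun z => p z.1) (verticalLegs (closure R)) := piecewise_eqOn _ _ _
  have hφh : EqOn φ (fun z => p z.2) (horizontalLegs (closure R)) := fun z hz => by
    by_cases hzv : z ∈ verticalLegs (closure R)
    · exact (hφv hzv).trans ((h.closure_leaves hp).eq_of_mem_legs hzv hz)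
    · exact piecewise_eq_of_notMem _ _ _ hzv
  have hφ : ContinuousOn φ (verticalLegs (closure R) ∪ horizontalLegs (closure R)) :=
    ContinuousOn.union_of_isClosed
      (ContinuousOn.congr (Continuous.continuousOn (by fun_prop)) hφv)
      (ContinuousOn.congr (Continuous.continuousOn (by fun_prop)) hφh) hv hh
  obtain ⟨P, hP⟩ := exists_planar_extension hX (hv.union hh) hφ
  refine ⟨P, fun z hz t ht => ?_⟩
  have hq : (z, t) ∈ leafPoints (closure R) := ⟨subset_closure hz, ht⟩
  have hzv : (z.1, t) ∈ verticalLegs (closure R) := ⟨_, hq, rfl⟩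
  have hzh : (t, z.2) ∈ horizontalLegs (closure R) := ⟨_, hq, rfl⟩
  exact ⟨(hP (Or.inl hzv)).trans (hφv hzv),
    ((hP (Or.inr hzh)).trans (hφh hzh)).trans (h.eq z hz).symm⟩

end Lamination

section Words

lemma sort_union_of_lt {ι : Type*} [LinearOrder ι] {A B : Finset ι}
    (h : ∀ a ∈ A, ∀ b ∈ B, a < b) : (A ∪ B).sort (· ≤ ·) = A.sort (· ≤ ·) ++ B.sort (· ≤ ·) := by
  have hunion : (A.sort (· ≤ ·) ++ B.sort (· ≤ ·)).toFinset = A ∪ B := by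
    simp only [List.toFinset_append, Finset.sort_toFinset]
  rw [← hunion, (List.toFinset_sort (· ≤ ·) ?_).2 ?_]
  · rw [List.nodup_append]
    exact ⟨A.sort_nodup _, B.sort_nodup _, fun a ha b hb =>
      (h a ((A.mem_sort _).1 ha) b ((B.mem_sort _).1 hb)).ne⟩
  · rw [List.pairwise_append]
    exact ⟨A.pairwise_sort _, B.pairwise_sort _, fun a ha b hb =>
      (h a ((A.mem_sort _).1 ha) b ((B.mem_sort _).1 hb)).le⟩

lemma exists_adjacent_of_not_isChain_sort {ι : Type*} [LinearOrder ι] {r : ι → ι → Prop}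
    {T : Finset ι} (h : ¬(T.sort (· ≤ ·)).IsChain r) :
    ∃ i ∈ T, ∃ j ∈ T, i < j ∧ ¬r i j ∧ ∀ k ∈ T, k ∉ Ioo i j := by
  rw [List.isChain_iff_getElem] at h
  push Not at h
  obtain ⟨n, hn, hr⟩ := h
  have hlt {a b : ℕ} (ha hb) : (T.sort (· ≤ ·))[a]'ha < (T.sort (· ≤ ·))[b]'hb ↔ a < b :=
    (T.sortedLT_sort.strictMono_get).lt_iff_lt (a := ⟨a, ha⟩) (b := ⟨b, hb⟩)
  refine ⟨_, (T.mem_sort _).1 (List.getElem_mem _), _, (T.mem_sort _).1 (List.getElem_mem _),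
    (hlt _ hn).2 n.lt_succ_self, hr, fun k hk hk' => ?_⟩
  obtain ⟨m, hm, rfl⟩ := List.mem_iff_getElem.1 ((T.mem_sort (· ≤ ·)).2 hk)
  exact (Nat.succ_le_of_lt ((hlt _ _).1 hk'.1)).not_gt ((hlt _ _).1 hk'.2)

variable {D : Type*}

namespace InfWord

variable (W : InfWord D)

/-- The finite word obtained from `W` by keeping the letters at the positions in `T`, evaluated in
the free group. -/
def evalT (T : Finset W.ι) : FreeGroup D :=
  ((T.sort (· ≤ ·)).map fun i => FreeGroup.mk [W.letter i]).prod

/-- The letters at positions `i` and `j` are inverse to each other. -/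
def Inv (i j : W.ι) : Prop :=
  (W.letter i).1 = (W.letter j).1 ∧ (W.letter i).2 = !(W.letter j).2

lemma evalT_union {A B : Finset W.ι} (h : ∀ a ∈ A, ∀ b ∈ B, a < b) :
    W.evalT (A ∪ B) = W.evalT A * W.evalT B := by
  simp only [evalT, sort_union_of_lt h, List.map_append, List.prod_append]

lemma evalT_singleton (i : W.ι) : W.evalT {i} = FreeGroup.mk [W.letter i] := by
  simp only [evalT, Finset.sort_singleton, List.map_singleton, List.prod_singleton]

lemma evalT_eq_mk (T : Finset W.ι) :
    W.evalT T = FreeGroup.mk ((T.sort (· ≤ ·)).map W.letter) := by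
  unfold evalT
  induction T.sort (· ≤ ·) with
  | nil => rfl
  | cons i l ih => rw [List.map_cons, List.prod_cons, ih, FreeGroup.mul_mk, List.map_cons]; rfl

variable {W}

lemma Inv.mk_mul_mk {i j : W.ι} (h : W.Inv i j) :
    FreeGroup.mk [W.letter i] * FreeGroup.mk [W.letter j] = 1 := by
  have : W.letter i = ((W.letter j).1, !(W.letter j).2) := Prod.ext h.1 h.2
  rw [mul_eq_one_iff_eq_inv, FreeGroup.inv_mk, this]
  rfl

lemma evalT_sdiff_pair {T : Finset W.ι} {i j : W.ι} (hi : i ∈ T) (hj : j ∈ T)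
    (hij : i < j) (h : W.Inv i j) (hadj : ∀ k ∈ T, k ∉ Ioo i j) :
    W.evalT (T \ {i, j}) = W.evalT T := by
  have hsdiff : T \ {i, j} = T.filter (· < i) ∪ T.filter (j < ·) := by
    grind
  have hunion : T = T.filter (· < i) ∪ ({i} ∪ ({j} ∪ T.filter (j < ·))) := by
    grind
  rw [hsdiff, W.evalT_union (by grind)]
  conv_rhs =>
    rw [hunion, W.evalT_union (by grind), W.evalT_union (by grind), W.evalT_union (by grind)]
  rw [evalT_singleton, evalT_singleton, ← mul_assoc (FreeGroup.mk _), h.mk_mul_mk, one_mul]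

lemma exists_adjacent_inv {T : Finset W.ι} (hne : T.Nonempty) (h : W.evalT T = 1) :
    ∃ i ∈ T, ∃ j ∈ T, i < j ∧ W.Inv i j ∧ ∀ k ∈ T, k ∉ Ioo i j := by
  have hnot : ¬FreeGroup.IsReduced ((T.sort (· ≤ ·)).map W.letter) := fun hr => by
    have hlen : T.card = 0 := by
      rw [← Finset.length_sort (· ≤ ·), ← List.length_map W.letter, ← hr.reduce_eq,
        ← FreeGroup.toWord_mk, ← evalT_eq_mk, h, FreeGroup.toWord_one, List.length_nil]
    exact hne.card_pos.ne' hlen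
  rw [FreeGroup.IsReduced, List.isChain_map] at hnot
  obtain ⟨i, hi, j, hj, hij, hinv, hadj⟩ := exists_adjacent_of_not_isChain_sort hnot
  rw [Classical.not_imp, ← Ne, ← Bool.eq_not] at hinv
  exact ⟨i, hi, j, hj, hij, hinv, hadj⟩

/-- A pairing of some positions of `W` by inverse letters in which no two pairs cross: an `InfNCIP`
without its covering condition. -/
structure IsNoncrossing (W : InfWord D) (Γ : Set (W.ι × W.ι)) : Prop where
  lt : ∀ p ∈ Γ, p.1 < p.2
  inv : ∀ p ∈ Γ, W.Inv p.1 p.2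
  disj : ∀ p ∈ Γ, ∀ q ∈ Γ, p ≠ q → p.1 ≠ q.1 ∧ p.1 ≠ q.2 ∧ p.2 ≠ q.1 ∧ p.2 ≠ q.2
  noncross : ∀ p ∈ Γ, ∀ q ∈ Γ, ¬(p.1 < q.1 ∧ q.1 < p.2 ∧ p.2 < q.2)

/-- The positions that occur in a pair of `Γ`. -/
def matched (Γ : Set (W.ι × W.ι)) : Set W.ι := {i | ∃ p ∈ Γ, p.1 = i ∨ p.2 = i}

lemma fst_mem_matched {Γ : Set (W.ι × W.ι)} {p : W.ι × W.ι} (hp : p ∈ Γ) : p.1 ∈ matched Γ :=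
  ⟨p, hp, Or.inl rfl⟩

lemma snd_mem_matched {Γ : Set (W.ι × W.ι)} {p : W.ι × W.ι} (hp : p ∈ Γ) : p.2 ∈ matched Γ :=
  ⟨p, hp, Or.inr rfl⟩

lemma matched_union (Γ Δ : Set (W.ι × W.ι)) : matched (Γ ∪ Δ) = matched Γ ∪ matched Δ := by
  ext i
  simp only [matched, mem_union, or_and_right, exists_or, mem_ofPred_eq]

lemma matched_singleton (i j : W.ι) : matched {(i, j)} = ({i, j} : Set W.ι) := by
  ext k
  simp only [matched, mem_singleton_iff, exists_eq_left, mem_ofPred_eq, mem_insert_iff, eq_comm]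

namespace IsNoncrossing

variable {Γ Δ : Set (W.ι × W.ι)}

lemma of_pairwise (h : ∀ p ∈ Γ, ∀ q ∈ Γ, ∃ Δ, W.IsNoncrossing Δ ∧ p ∈ Δ ∧ q ∈ Δ) :
    W.IsNoncrossing Γ where
  lt p hp := let ⟨_, hΔ, hpΔ, _⟩ := h p hp p hp; hΔ.lt p hpΔ
  inv p hp := let ⟨_, hΔ, hpΔ, _⟩ := h p hp p hp; hΔ.inv p hpΔ
  disj p hp q hq := let ⟨_, hΔ, hpΔ, hqΔ⟩ := h p hp q hq; hΔ.disj p hpΔ q hqΔ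
  noncross p hp q hq := let ⟨_, hΔ, hpΔ, hqΔ⟩ := h p hp q hq; hΔ.noncross p hpΔ q hqΔ

lemma singleton {i j : W.ι} (hij : i < j) (hinv : W.Inv i j) : W.IsNoncrossing {(i, j)} where
  lt := by rintro _ rfl; exact hij
  inv := by rintro _ rfl; exact hinv
  disj := by rintro _ rfl _ rfl h; exact absurd rfl h
  noncross := by rintro _ rfl _ rfl h; exact h.1.false

lemma union (hΓ : W.IsNoncrossing Γ) (hΔ : W.IsNoncrossing Δ)
    (h : ∀ p ∈ Γ, Disjoint (Icc p.1 p.2) (matched Δ)) : W.IsNoncrossing (Γ ∪ Δ) where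
  lt p := by
    rintro (hp | hp)
    exacts [hΓ.lt p hp, hΔ.lt p hp]
  inv p := by
    rintro (hp | hp)
    exacts [hΓ.inv p hp, hΔ.inv p hp]
  disj := by
    have key (p) (hp : p ∈ Γ) (q) (hq : q ∈ Δ) :
        p.1 ≠ q.1 ∧ p.1 ≠ q.2 ∧ p.2 ≠ q.1 ∧ p.2 ≠ q.2 :=
      have h1 : p.1 ∈ Icc p.1 p.2 := left_mem_Icc.2 (hΓ.lt p hp).le
      have h2 : p.2 ∈ Icc p.1 p.2 := right_mem_Icc.2 (hΓ.lt p hp).le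
      ⟨(h p hp).ne_of_mem h1 (fst_mem_matched hq), (h p hp).ne_of_mem h1 (snd_mem_matched hq),
        (h p hp).ne_of_mem h2 (fst_mem_matched hq), (h p hp).ne_of_mem h2 (snd_mem_matched hq)⟩
    rintro p (hp | hp) q (hq | hq) hpq
    · exact hΓ.disj p hp q hq hpq
    · exact key p hp q hq
    · obtain ⟨h1, h2, h3, h4⟩ := key q hq p hp
      exact ⟨h1.symm, h3.symm, h2.symm, h4.symm⟩
    · exact hΔ.disj p hp q hq hpq
  noncross := by
    rintro p (hp | hp) q (hq | hq) ⟨h1, h2, h3⟩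
    · exact hΓ.noncross p hp q hq ⟨h1, h2, h3⟩
    · exact (h p hp).le_bot ⟨⟨h1.le, h2.le⟩, fst_mem_matched hq⟩
    · exact (h q hq).le_bot ⟨⟨h2.le, h3.le⟩, snd_mem_matched hp⟩
    · exact hΔ.noncross p hp q hq ⟨h1, h2, h3⟩

end IsNoncrossing

lemma exists_isNoncrossing_of_evalT_eq_one (T : Finset W.ι) (h : W.evalT T = 1) :
    ∃ Γ, W.IsNoncrossing Γ ∧ matched Γ = T := by
  induction T using Finset.strongInduction with
  | H T ih =>
    obtain rfl | hne := T.eq_empty_or_nonempty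
    · exact ⟨∅, ⟨by simp, by simp, by simp, by simp⟩, by simp [matched]⟩
    obtain ⟨i, hi, j, hj, hij, hinv, hadj⟩ := exists_adjacent_inv hne h
    obtain ⟨Γ, hΓ, hΓT⟩ := ih (T \ {i, j})
      (Finset.sdiff_ssubset (Finset.insert_subset hi (Finset.singleton_subset_iff.2 hj))
        ⟨i, by simp⟩)
      (by rw [evalT_sdiff_pair hi hj hij hinv hadj, h])
    refine ⟨{(i, j)} ∪ Γ, (IsNoncrossing.singleton hij hinv).union hΓ ?_, ?_⟩
    · rintro _ rfl
      rw [hΓT, disjoint_left]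
      grind
    · rw [matched_union, matched_singleton, hΓT]
      grind

/-- The inclusion of the positions of a subword. -/
def incl (S : Set W.ι) : (W.restrict S).ι ↪ W.ι := Function.Embedding.subtype (· ∈ S)

lemma evalT_restrict (S : Set W.ι) (T : Finset (W.restrict S).ι) :
    (W.restrict S).evalT T = W.evalT (T.map (incl S)) := by
  have h : (T.sort (· ≤ ·)).map (incl S) = (T.map (incl S)).sort (· ≤ ·) :=
    Finset.map_sort (incl S) T (· ≤ ·) (· ≤ ·) fun a _ b _ => Iff.rfl
  unfold evalT
  rw [← h, List.map_map]
  rfl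

lemma evalF_restrict (S : Set W.ι) (F : Finset D) :
    (W.restrict S).evalF F = W.evalT ((W.finF F).toFinset.filter (· ∈ S)) := by
  refine (evalT_restrict S ((W.restrict S).finF F).toFinset).trans (congrArg _ ?_)
  ext i
  rw [Finset.mem_map, Finset.mem_filter, Set.Finite.mem_toFinset]
  constructor
  · rintro ⟨⟨k, hk⟩, h, rfl⟩
    exact ⟨(((W.restrict S).finF F).mem_toFinset (a := ⟨k, hk⟩)).1 h, hk⟩
  · rintro ⟨h, hk⟩
    exact ⟨⟨i, hk⟩, (((W.restrict S).finF F).mem_toFinset (a := ⟨i, hk⟩)).2 h, rfl⟩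

/-- The pairings of the finite subwords converge along an ultrafilter, because each letter has only
finitely many possible partners. -/
lemma exists_isNoncrossing_of_isNull (S : Set W.ι) (h : (W.restrict S).IsNull) :
    ∃ Γ, W.IsNoncrossing Γ ∧ matched Γ = S := by
  choose G hG hGS using fun F => exists_isNoncrossing_of_evalT_eq_one _
    ((evalF_restrict S F).symm.trans (h F))
  have hmem {F : Finset D} {k : W.ι} : k ∈ matched (G F) ↔ (W.letter k).1 ∈ F ∧ k ∈ S := by
    simp [hGS]
  let 𝓤 : Ultrafilter (Finset D) := Ultrafilter.of Filter.atTop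
  refine ⟨{p | ∀ᶠ F in 𝓤, p ∈ G F}, .of_pairwise fun p hp q hq => ?_, subset_antisymm ?_ ?_⟩
  · obtain ⟨F, hF⟩ := (Filter.Eventually.and hp hq).exists
    exact ⟨G F, hG F, hF⟩
  · rintro k ⟨p, hp, hk⟩
    obtain ⟨F, hF⟩ := Filter.Eventually.exists hp
    exact (hmem.1 ⟨p, hF, hk⟩).2
  · intro k hk
    have hfin := W.finOcc (W.letter k).1
    have hev : ∀ᶠ F in (𝓤 : Filter (Finset D)), ∃ q ∈ {i : W.ι | (W.letter i).1 = (W.letter k).1} ×ˢ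
        {i : W.ι | (W.letter i).1 = (W.letter k).1}, q ∈ G F ∧ (q.1 = k ∨ q.2 = k) := by
      filter_upwards [Ultrafilter.of_le _ (Filter.mem_atTop {(W.letter k).1})] with F hF
      obtain ⟨q, hq, hqk⟩ := hmem.2 ⟨hF (Finset.mem_singleton_self _), hk⟩
      have hinv := ((hG F).inv q hq).1
      refine ⟨q, ?_, hq, hqk⟩
      rcases hqk with rfl | rfl
      exacts [⟨rfl, hinv.symm⟩, ⟨hinv, rfl⟩]
    obtain ⟨q, -, hq⟩ := (Ultrafilter.eventually_exists_mem_iff (hfin.prod hfin)).1 hev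
    exact ⟨q, hq.mono fun F h => h.1, hq.exists.choose_spec.2⟩

end InfWord

open InfWord

variable {W : InfWord D} {Γ : Set (W.ι × W.ι)}

namespace InfNCIP

lemma isNoncrossing (hΓ : InfNCIP W Γ) : W.IsNoncrossing Γ := ⟨hΓ.lt, hΓ.inv, hΓ.disj, hΓ.noncross⟩

lemma sUnion_of_isChain {c : Set (Set (W.ι × W.ι))} (hc : ∀ Γ ∈ c, InfNCIP W Γ)
    (hchain : IsChain (· ⊆ ·) c) : InfNCIP W (⋃₀ c) := by
  have hnc : W.IsNoncrossing (⋃₀ c) := .of_pairwise <| by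
    rintro p ⟨Γ, hΓ, hp⟩ q ⟨Δ, hΔ, hq⟩
    rcases hchain.total hΓ hΔ with h | h
    exacts [⟨Δ, (hc Δ hΔ).isNoncrossing, h hp, hq⟩, ⟨Γ, (hc Γ hΓ).isNoncrossing, hp, h hq⟩]
  refine ⟨hnc.lt, hnc.inv, hnc.disj, hnc.noncross, ?_⟩
  rintro p ⟨Γ, hΓ, hp⟩ k hpk hkp
  obtain ⟨q, hq, hqk⟩ := (hc Γ hΓ).covered p hp k hpk hkp
  exact ⟨q, ⟨Γ, hΓ, hq⟩, hqk⟩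

variable (W) in
lemma exists_maximal : ∃ Γ, Maximal (InfNCIP W) Γ :=
  zorn_subset {Γ | InfNCIP W Γ} fun c hc hchain =>
    ⟨⋃₀ c, sUnion_of_isChain hc hchain, fun _ => subset_sUnion_of_mem⟩

lemma Icc_subset_matched (hΓ : InfNCIP W Γ) {p : W.ι × W.ι} (hp : p ∈ Γ) :
    Icc p.1 p.2 ⊆ matched Γ :=
  fun k hk => hΓ.covered p hp k hk.1 hk.2

lemma exists_innermost (hΓ : InfNCIP W Γ) {T : Finset W.ι} (hT : ∀ p ∈ Γ, p.1 ∈ T ↔ p.2 ∈ T)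
    (hex : ∃ p ∈ Γ, p.1 ∈ T) : ∃ p ∈ Γ, p.1 ∈ T ∧ ∀ k ∈ T, k ∉ Ioo p.1 p.2 := by
  obtain ⟨p₀, hp₀, hp₀T⟩ := hex
  obtain ⟨i, hi, hmax⟩ := Finset.exists_max_image (T.filter fun i => ∃ p ∈ Γ, p.1 = i) id
    ⟨p₀.1, Finset.mem_filter.2 ⟨hp₀T, p₀, hp₀, rfl⟩⟩
  obtain ⟨hiT, p, hp, rfl⟩ := Finset.mem_filter.1 hi
  have hle (q) (hq : q ∈ Γ) (hqT : q.1 ∈ T) : q.1 ≤ p.1 :=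
    hmax _ (Finset.mem_filter.2 ⟨hqT, q, hq, rfl⟩)
  refine ⟨p, hp, hiT, fun k hk hkp => ?_⟩
  obtain ⟨q, hq, rfl | rfl⟩ := hΓ.covered p hp k hkp.1.le hkp.2.le
  · exact hkp.1.not_ge (hle q hq hk)
  · have hne : p.1 ≠ q.1 := (hΓ.disj p hp q hq (by rintro rfl; exact hkp.2.false)).1
    have hlt : q.1 < p.1 := (hle q hq ((hT q hq).2 hk)).lt_of_ne' hne
    exact hΓ.noncross q hq p hp ⟨hlt, hkp.1, hkp.2⟩

lemma evalT_filter_compl_matched (hΓ : InfNCIP W Γ) (T : Finset W.ι)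
    (hT : ∀ p ∈ Γ, p.1 ∈ T ↔ p.2 ∈ T) : W.evalT (T.filter (· ∉ matched Γ)) = W.evalT T := by
  induction T using Finset.strongInduction with
  | H T ih =>
    by_cases hex : ∃ p ∈ Γ, p.1 ∈ T
    · obtain ⟨p, hp, hp1, hadj⟩ := hΓ.exists_innermost hT hex
      have hp2 := (hT p hp).1 hp1
      have hsub : {p.1, p.2} ⊆ T :=
        Finset.insert_subset hp1 (Finset.singleton_subset_iff.2 hp2)
      have hfilter : T.filter (· ∉ matched Γ) = (T \ {p.1, p.2}).filter (· ∉ matched Γ) := by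
        ext k
        simp only [Finset.mem_filter, Finset.mem_sdiff, Finset.mem_insert, Finset.mem_singleton]
        refine and_congr_left fun hk => (and_iff_left ?_).symm
        rintro (rfl | rfl)
        exacts [hk (fst_mem_matched hp), hk (snd_mem_matched hp)]
      rw [hfilter, ← evalT_sdiff_pair hp1 hp2 (hΓ.lt p hp) (hΓ.inv p hp) hadj]
      refine ih _ (Finset.sdiff_ssubset hsub ⟨p.1, by simp⟩) fun q hq => ?_
      obtain rfl | hqp := eq_or_ne q p
      · simp
      · have := hΓ.disj q hq p hp hqp
        have := hT q hq
        grind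
    · push Not at hex
      congr 1
      refine Finset.filter_true_of_mem ?_
      rintro k hk ⟨p, hp, rfl | rfl⟩
      exacts [hex p hp hk, hex p hp ((hT p hp).2 hk)]

lemma evalF_restrict_compl_matched (hΓ : InfNCIP W Γ) (F : Finset D) :
    (W.restrict (matched Γ)ᶜ).evalF F = W.evalF F := by
  have hF : ∀ p ∈ Γ, p.1 ∈ (W.finF F).toFinset ↔ p.2 ∈ (W.finF F).toFinset := fun p hp => by
    simp [(hΓ.inv p hp).1]
  rw [evalF_restrict]
  convert hΓ.evalT_filter_compl_matched _ hF
  rfl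

end InfNCIP

lemma InfWord.IsNoncrossing.image_incl {S : Set W.ι} {G : Set ((W.restrict S).ι × (W.restrict S).ι)}
    (hG : (W.restrict S).IsNoncrossing G) : W.IsNoncrossing (Prod.map (incl S) (incl S) '' G) where
  lt := by
    rintro _ ⟨p, hp, rfl⟩
    exact hG.lt p hp
  inv := by
    rintro _ ⟨p, hp, rfl⟩
    exact hG.inv p hp
  disj := by
    rintro _ ⟨p, hp, rfl⟩ _ ⟨q, hq, rfl⟩ hpq
    simpa only [Prod.map_fst, Prod.map_snd, (incl S).injective.ne_iff] using
      hG.disj p hp q hq (by rintro rfl; exact hpq rfl)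
  noncross := by
    rintro _ ⟨p, hp, rfl⟩ _ ⟨q, hq, rfl⟩
    exact hG.noncross p hp q hq

lemma InfWord.matched_image_incl {S : Set W.ι} (G : Set ((W.restrict S).ι × (W.restrict S).ι)) :
    matched (Prod.map (incl S) (incl S) '' G) = incl S '' matched G := by
  ext k
  constructor
  · rintro ⟨_, ⟨p, hp, rfl⟩, rfl | rfl⟩
    exacts [⟨p.1, fst_mem_matched hp, rfl⟩, ⟨p.2, snd_mem_matched hp, rfl⟩]
  · rintro ⟨_, ⟨p, hp, rfl | rfl⟩, rfl⟩
    exacts [⟨_, ⟨p, hp, rfl⟩, Or.inl rfl⟩, ⟨_, ⟨p, hp, rfl⟩, Or.inr rfl⟩]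

lemma InfNCIP.union_of_isConvexSub (hΓ : InfNCIP W Γ) {S : Set (W.restrict (matched Γ)ᶜ).ι}
    (hS : IsConvexSub S) {G : Set ((W.restrict (matched Γ)ᶜ).ι × (W.restrict (matched Γ)ᶜ).ι)}
    (hG : (W.restrict (matched Γ)ᶜ).IsNoncrossing G) (hGS : matched G = S) :
    InfNCIP W (Γ ∪ Prod.map (incl _) (incl _) '' G) := by
  have hnc : W.IsNoncrossing (Γ ∪ Prod.map (incl _) (incl _) '' G) := by
    refine hΓ.isNoncrossing.union hG.image_incl fun p hp => ?_
    rw [matched_image_incl, disjoint_left]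
    rintro _ hk ⟨k, -, rfl⟩
    exact k.2 (hΓ.Icc_subset_matched hp hk)
  refine ⟨hnc.lt, hnc.inv, hnc.disj, hnc.noncross, fun p hp k hpk hkp => ?_⟩
  change k ∈ matched _
  rw [matched_union, matched_image_incl, hGS]
  obtain hp | ⟨p, hp, rfl⟩ := hp
  · exact Or.inl (hΓ.Icc_subset_matched hp ⟨hpk, hkp⟩)
  · refine or_iff_not_imp_left.2 fun hk => ⟨⟨k, hk⟩, ?_, rfl⟩
    exact hS p.1 (hGS ▸ fst_mem_matched hp) p.2 (hGS ▸ snd_mem_matched hp) ⟨k, hk⟩ hpk hkp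

lemma InfNCIP.reduced_of_maximal (hΓ : Maximal (InfNCIP W) Γ) :
    (W.restrict (matched Γ)ᶜ).Reduced := by
  rintro S ⟨x, hx⟩ hS hnull
  obtain ⟨G, hG, hGS⟩ := exists_isNoncrossing_of_isNull S hnull
  have hle : Prod.map (incl _) (incl _) '' G ⊆ Γ := subset_union_right.trans
    (hΓ.le_of_ge (hΓ.prop.union_of_isConvexSub hS hG hGS) subset_union_left)
  obtain ⟨q, hq, -⟩ := hGS.symm ▸ hx
  exact q.1.2 (fst_mem_matched (hle ⟨q, hq, rfl⟩))

end Words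

section EarringSpace

variable {X : Type*} {d : ℕ+ → X}

lemma wt_apply (hd : Function.Injective d) (n : ℕ+) : wt d (d n) = 1 / (n : ℝ) := by
  have h : ∃ m : ℕ+, d n = d m := ⟨n, rfl⟩
  rw [wt, dif_pos h, ← hd h.choose_spec]

lemma wt_nonneg (x : X) : 0 ≤ wt d x := by
  unfold wt
  split_ifs <;> positivity

lemma wt_eq_zero {x : X} (h : ¬∃ n : ℕ+, x = d n) : wt d x = 0 := dif_neg h

lemma wt_mul_dist_triangle (x : X) (s t v : Circle) :
    wt d x * dist s v ≤ wt d x * dist s t + wt d x * dist t v := by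
  rw [← mul_add]
  exact mul_le_mul_of_nonneg_left (dist_triangle _ _ _) (wt_nonneg x)

variable (d) in
/-- The `rho`-distance from a point of `E(X,D)` to the base copy of `X`. -/
def height (p : X × Circle) : ℝ := wt d p.1 * dist p.2 1

lemma height_nonneg (p : X × Circle) : 0 ≤ height d p := mul_nonneg (wt_nonneg _) dist_nonneg

variable [MetricSpace X]

lemma rho_of_fst_eq {p q : X × Circle} (h : p.1 = q.1) :
    rho d p q = wt d p.1 * dist p.2 q.2 := by
  unfold rho
  split_ifs with hD
  · rfl
  · have hp : wt d p.1 = 0 := wt_eq_zero fun hp => hD ⟨h, hp⟩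
    rw [← h, hp, dist_self]
    ring

lemma rho_of_fst_ne {p q : X × Circle} (h : p.1 ≠ q.1) :
    rho d p q = dist p.1 q.1 + height d p + height d q := if_neg fun h' => h h'.1

lemma rho_self (p : X × Circle) : rho d p p = 0 := by
  rw [rho_of_fst_eq rfl, dist_self, mul_zero]

lemma rho_comm (p q : X × Circle) : rho d p q = rho d q p := by
  by_cases h : p.1 = q.1
  · rw [rho_of_fst_eq h, rho_of_fst_eq h.symm, h, dist_comm]
  · rw [rho_of_fst_ne h, rho_of_fst_ne (Ne.symm h), dist_comm]
    ring

lemma dist_fst_le_rho (p q : X × Circle) : dist p.1 q.1 ≤ rho d p q := by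
  by_cases h : p.1 = q.1
  · rw [rho_of_fst_eq h, h, dist_self]
    exact mul_nonneg (wt_nonneg _) dist_nonneg
  · rw [rho_of_fst_ne h]
    linarith [height_nonneg (d := d) p, height_nonneg (d := d) q]

lemma height_le_rho_add_height (p q : X × Circle) : height d p ≤ rho d p q + height d q := by
  by_cases h : p.1 = q.1
  · rw [rho_of_fst_eq h, height, height, ← h]
    exact wt_mul_dist_triangle _ _ _ _
  · rw [rho_of_fst_ne h]
    linarith [dist_nonneg (x := p.1) (y := q.1), height_nonneg (d := d) q]

lemma rho_triangle (p q r : X × Circle) : rho d p r ≤ rho d p q + rho d q r := by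
  by_cases hpr : p.1 = r.1 <;> by_cases hpq : p.1 = q.1
  · rw [rho_of_fst_eq hpr, rho_of_fst_eq hpq, rho_of_fst_eq (hpq.symm.trans hpr), ← hpq]
    exact wt_mul_dist_triangle _ _ _ _
  · rw [rho_of_fst_eq hpr, rho_of_fst_ne hpq, rho_of_fst_ne fun h => hpq (hpr.trans h.symm)]
    have hle : wt d p.1 * dist p.2 r.2 ≤ height d p + height d r := by
      rw [height, height, ← hpr, dist_comm r.2]
      exact wt_mul_dist_triangle _ _ _ _
    have hpq' := dist_nonneg (x := p.1) (y := q.1)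
    have hqr' := dist_nonneg (x := q.1) (y := r.1)
    linarith [height_nonneg (d := d) q]
  · rw [rho_of_fst_ne hpr, rho_of_fst_ne (p := q) (hpq ▸ hpr), hpq]
    linarith [height_le_rho_add_height (d := d) p q]
  · rw [rho_of_fst_ne hpr]
    by_cases hqr : q.1 = r.1
    · rw [rho_of_fst_ne hpq, hqr, rho_comm q r]
      linarith [height_le_rho_add_height (d := d) r q]
    · rw [rho_of_fst_ne hpq, rho_of_fst_ne hqr]
      linarith [dist_triangle p.1 q.1 r.1, height_nonneg (d := d) q]

lemma continuous_pt_fst : Continuous fun p : ESp X d => p.pt.1 := by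
  refine continuous_iff_continuousAt.2 fun p => Metric.tendsto_nhds.2 fun r hr => ?_
  have hball : IsOpen {q : ESp X d | rho d p.pt q.pt < r} :=
    TopologicalSpace.isOpen_generateFrom_of_mem ⟨p, r, rfl⟩
  filter_upwards [hball.mem_nhds (show rho d p.pt p.pt < r by rwa [rho_self])] with q hq
  rw [dist_comm]
  exact (dist_fst_le_rho _ _).trans_lt hq

lemma continuousOn_of_rho {Z : Type*} [TopologicalSpace Z] {F : Z → ESp X d} {S : Set Z}
    (h : ∀ z ∈ S, ∀ ε > 0, ∀ᶠ w in 𝓝[S] z, rho d (F z).pt (F w).pt < ε) : ContinuousOn F S := by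
  intro z hz
  refine TopologicalSpace.tendsto_nhds_generateFrom_iff.2 ?_
  rintro _ ⟨p, r, rfl⟩ hp
  filter_upwards [h z hz (r - rho d p.pt (F z).pt) (sub_pos.2 hp)] with w hw
  change rho d p.pt (F w).pt < r
  linarith [rho_triangle (d := d) p.pt (F z).pt (F w).pt]

lemma ESp.ext_pt {p q : ESp X d} (h : p.pt = q.pt) : p = q := by
  cases p
  cases q
  cases h
  rfl

lemma InX.eq_emb {p : ESp X d} (h : InX p) : p = emb d p.pt.1 := ESp.ext_pt (Prod.ext rfl h)

variable (d) in
/-- The point of `E(X,D)` over `x` whose position on the circle attached at `d n` is `ψ n`; it is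
the base point `x` when no circle is attached there. -/
def mkE (x : X) (ψ : ℕ+ → Circle) : ESp X d :=
  ⟨(x, if h : ∃ n, x = d n then ψ h.choose else 1), by
    by_cases h : ∃ n, x = d n
    exacts [Or.inr h, Or.inl (dif_neg h)]⟩

lemma mkE_apply (hd : Function.Injective d) (n : ℕ+) (ψ : ℕ+ → Circle) :
    (mkE d (d n) ψ).pt = (d n, ψ n) := by
  have h : ∃ m : ℕ+, d n = d m := ⟨n, rfl⟩
  refine Prod.ext rfl ?_
  change (if h : ∃ m, d n = d m then ψ h.choose else 1) = ψ n
  rw [dif_pos h, ← hd h.choose_spec]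

lemma mkE_eq_emb {x : X} {ψ : ℕ+ → Circle} (h : ∀ n, x = d n → ψ n = 1) :
    mkE d x ψ = emb d x := by
  refine ESp.ext_pt (Prod.ext rfl ?_)
  by_cases hx : ∃ n, x = d n
  exacts [(dif_pos hx).trans (h _ hx.choose_spec), dif_neg hx]

lemma circle_dist_le_two (s t : Circle) : dist s t ≤ 2 := by
  have h := dist_triangle_right (s : ℂ) t 0
  simp only [dist_zero_right, Circle.norm_coe] at h
  exact h.trans_eq one_add_one_eq_two

lemma eventually_scaled_dist_lt {Z : Type*} [TopologicalSpace Z] {S : Set Z}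
    {ψ : Z → ℕ+ → Circle} (hψ : ∀ n, ContinuousOn (fun z => ψ z n) S) {z : Z} (hz : z ∈ S)
    {ε : ℝ} (hε : 0 < ε) : ∀ᶠ w in 𝓝[S] z, ∀ n : ℕ+, 1 / (n : ℝ) * dist (ψ z n) (ψ w n) < ε := by
  obtain ⟨M, hM⟩ := exists_nat_gt (2 / ε)
  have hfin : {n : ℕ+ | (n : ℕ) ≤ M}.Finite :=
    (Set.finite_Iic M).preimage PNat.coe_injective.injOn
  have hnear : ∀ᶠ w in 𝓝[S] z, ∀ n : ℕ+, (n : ℕ) ≤ M → dist (ψ z n) (ψ w n) < ε := by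
    refine (Filter.eventually_all_finite hfin).2 fun n _ => ?_
    simp only [dist_comm (ψ z n)]
    exact Metric.tendsto_nhds.1 (hψ n z hz) ε hε
  filter_upwards [hnear] with w hw n
  have hn : (1 : ℝ) ≤ n := by exact_mod_cast one_le (a := n)
  rw [one_div, inv_mul_eq_div]
  by_cases hnM : (n : ℕ) ≤ M
  · exact (div_le_self dist_nonneg hn).trans_lt (hw n hnM)
  · have hMn : (M : ℝ) < n := by exact_mod_cast not_le.1 hnM
    refine (div_le_div_of_nonneg_right (circle_dist_le_two _ _) (by positivity)).trans_lt ?_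
    exact (div_lt_comm₀ (by positivity) hε).2 (hM.trans hMn)

lemma wt_mul_dist_mkE_lt (hd : Function.Injective d) (x : X) {ψ χ : ℕ+ → Circle} {δ : ℝ}
    (h : ∀ n : ℕ+, 1 / (n : ℝ) * dist (ψ n) (χ n) < δ) :
    wt d x * dist (mkE d x ψ).pt.2 (mkE d x χ).pt.2 < δ := by
  by_cases hx : ∃ n, x = d n
  · obtain ⟨n, rfl⟩ := hx
    rw [wt_apply hd, mkE_apply hd, mkE_apply hd]
    exact h n
  · rw [wt_eq_zero hx, zero_mul]
    exact (mul_nonneg (by positivity) dist_nonneg).trans_lt (h 1)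

lemma height_mkE_lt (hd : Function.Injective d) {x y : X} (hxy : x ≠ y) {ψ χ : ℕ+ → Circle}
    {δ : ℝ} (h : ∀ n : ℕ+, 1 / (n : ℝ) * dist (ψ n) (χ n) < δ) (hχ : ∀ n, χ n ≠ 1 → y = d n) :
    height d (mkE d x ψ).pt < δ := by
  have hχx : (mkE d x χ).pt.2 = 1 := by
    rw [mkE_eq_emb fun n hn => by_contra fun hne => hxy (hn.trans (hχ n hne).symm)]
    rfl
  rw [height, ← hχx]
  exact wt_mul_dist_mkE_lt hd x h

lemma rho_mkE_lt (hd : Function.Injective d) {x y : X} {ψ χ : ℕ+ → Circle} {δ : ℝ}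
    (h : ∀ n : ℕ+, 1 / (n : ℝ) * dist (ψ n) (χ n) < δ) (hψ : ∀ n, ψ n ≠ 1 → x = d n)
    (hχ : ∀ n, χ n ≠ 1 → y = d n) :
    rho d (mkE d x ψ).pt (mkE d y χ).pt < dist x y + δ + δ := by
  have hδ : 0 < δ := (mul_nonneg (by positivity) dist_nonneg).trans_lt (h 1)
  by_cases hxy : x = y
  · subst hxy
    have hlt := wt_mul_dist_mkE_lt hd x h
    have heq : rho d (mkE d x ψ).pt (mkE d x χ).pt = _ := rho_of_fst_eq rfl
    rw [heq, dist_self]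
    change wt d x * _ < _
    linarith
  · rw [rho_of_fst_ne (show (mkE d x ψ).pt.1 ≠ (mkE d y χ).pt.1 from hxy)]
    have hheight := height_mkE_lt hd hxy h hχ
    have hheight' := height_mkE_lt hd (Ne.symm hxy) (fun n => dist_comm (ψ n) (χ n) ▸ h n) hψ
    exact add_lt_add (add_lt_add_right hheight _) hheight'

lemma continuousOn_mkE (hd : Function.Injective d) {Z : Type*} [TopologicalSpace Z] {S : Set Z}
    {P : Z → X} {ψ : Z → ℕ+ → Circle} (hP : ContinuousOn P S)
    (hψ : ∀ n, ContinuousOn (fun z => ψ z n) S) (hψP : ∀ z ∈ S, ∀ n, ψ z n ≠ 1 → P z = d n) :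
    ContinuousOn (fun z => mkE d (P z) (ψ z)) S := by
  refine continuousOn_of_rho fun z hz ε hε => ?_
  have hε3 : 0 < ε / 3 := by positivity
  filter_upwards [eventually_scaled_dist_lt hψ hz hε3, Metric.tendsto_nhds.1 (hP z hz) _ hε3,
    self_mem_nhdsWithin] with w hw hPw hwS
  rw [dist_comm] at hPw
  linarith [rho_mkE_lt hd hw (hψP z hz) (hψP w hwS)]

end EarringSpace

section ProperPaths

/-- A linearly ordered family of pairwise disjoint open intervals `(u i, v i)` in `[a,b]`, listed
from left to right. -/
structure IsIntervalFamily {ι : Type*} [LinearOrder ι] (a b : ℝ) (u v : ι → ℝ) : Prop where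
  left_le : ∀ i, a ≤ u i
  lt : ∀ i, u i < v i
  le_right : ∀ i, v i ≤ b
  le_of_lt : ∀ ⦃i j⦄, i < j → v i ≤ u j

namespace IsIntervalFamily

variable {ι : Type*} [LinearOrder ι] {a b : ℝ} {u v : ι → ℝ} (hI : IsIntervalFamily a b u v)
include hI

lemma Icc_subset (i : ι) : Icc (u i) (v i) ⊆ Icc a b :=
  Icc_subset_Icc (hI.left_le i) (hI.le_right i)

lemma index_le {i j : ι} {s t : ℝ} (hs : s ∈ Icc (u i) (v i)) (ht : t ∈ Icc (u j) (v j))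
    (hst : s < t) : i ≤ j :=
  not_lt.1 fun hji => (ht.2.trans (hI.le_of_lt hji)).not_gt (hs.1.trans_lt hst)

lemma index_eq {i j : ι} {s : ℝ} (hi : s ∈ Ioo (u i) (v i)) (hj : s ∈ Icc (u j) (v j)) :
    i = j := by
  rcases lt_trichotomy i j with hij | hij | hij
  · exact absurd hi.2 ((hI.le_of_lt hij).trans hj.1).not_gt
  · exact hij
  · exact absurd hi.1 (hj.2.trans (hI.le_of_lt hij)).not_gt

lemma left_notMem_Ioo (i j : ι) : u j ∉ Ioo (u i) (v i) := fun h => by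
  obtain rfl := hI.index_eq h ⟨le_rfl, (hI.lt j).le⟩
  exact h.1.false

lemma right_notMem_Ioo (i j : ι) : v j ∉ Ioo (u i) (v i) := fun h => by
  obtain rfl := hI.index_eq h ⟨(hI.lt j).le, le_rfl⟩
  exact h.2.false

end IsIntervalFamily

/-- `α` increases continuously from `0` before `u` to `1` after `v`. -/
structure IsRamp (α : ℝ → ℝ) (u v : ℝ) : Prop where
  continuous : Continuous α
  monotone : Monotone α
  eq_zero : ∀ s ≤ u, α s = 0
  eq_one : ∀ s, v ≤ s → α s = 1

namespace IsRamp

variable {α : ℝ → ℝ} {u v : ℝ}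

lemma nonneg (h : IsRamp α u v) (s : ℝ) : 0 ≤ α s := by
  rw [← h.eq_zero _ (min_le_right s u)]
  exact h.monotone (min_le_left _ _)

lemma le_one (h : IsRamp α u v) (s : ℝ) : α s ≤ 1 := by
  rw [← h.eq_one _ (le_max_right s v)]
  exact h.monotone (le_max_left _ _)

lemma iccExtend {φ : ℝ → ℝ} (huv : u ≤ v) (hc : ContinuousOn φ (Icc u v))
    (hm : MonotoneOn φ (Icc u v)) (h0 : φ u = 0) (h1 : φ v = 1) :
    IsRamp (IccExtend huv ((Icc u v).domRestrict φ)) u v where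
  continuous := hc.domRestrict.Icc_extend'
  monotone := Monotone.IccExtend _ fun x y hxy => hm x.2 y.2 hxy
  eq_zero _ hs := (IccExtend_of_le_left _ _ hs).trans h0
  eq_one _ hs := (IccExtend_of_right_le _ _ hs).trans h1

end IsRamp

/-- The point of the circle at the fraction `x` of the winding (if `l` is `true`) or of the reverse
winding (if `l` is `false`). -/
def phase (l : Bool) (x : ℝ) : Circle := Circle.exp ((if l then 1 else -1) * (2 * Real.pi * x))

lemma continuous_phase (l : Bool) : Continuous (phase l) := by
  unfold phase
  fun_prop

lemma phase_zero (l : Bool) : phase l 0 = 1 := by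
  rw [phase, mul_zero, mul_zero, Circle.exp_zero]

lemma phase_not (l : Bool) (x : ℝ) : phase (!l) x = (phase l x)⁻¹ := by
  cases l <;> simp [phase, Circle.exp_neg]

lemma phase_one (l : Bool) : phase l 1 = 1 := by
  cases l <;> simp [phase, Circle.exp_neg]

lemma phase_one_sub (l : Bool) (x : ℝ) : phase l (1 - x) = phase (!l) x := by
  rw [phase_not, eq_inv_iff_mul_eq_one, phase, phase, ← Circle.exp_add, ← phase_one l, phase]
  congr 1
  ring

lemma IsRamp.phase_eq_one {α : ℝ → ℝ} {u v : ℝ} (h : IsRamp α u v) (l : Bool) {s : ℝ}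
    (hs : s ∉ Ioo u v) : phase l (α s) = 1 := by
  rcases le_or_gt s u with hsu | hus
  · rw [h.eq_zero s hsu, phase_zero]
  · rw [h.eq_one s (not_lt.1 fun hsv => hs ⟨hus, hsv⟩), phase_one]

variable {X : Type*} [MetricSpace X] {d : ℕ+ → X} {f g : ℝ → ESp X d} {a b : ℝ}

lemma IsWinding.congr {u v : ℝ} {n : ℕ+} (h : IsWinding d f u v n)
    (hfg : EqOn g f (Icc u v)) : IsWinding d g u v n := by
  obtain ⟨φ, hc, hm, h0, h1, hφ⟩ := h
  exact ⟨φ, hc, hm, h0, h1, fun t ht => by rw [hfg ht, hφ t ht]⟩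

lemma IsRevWinding.congr {u v : ℝ} {n : ℕ+} (h : IsRevWinding d f u v n)
    (hfg : EqOn g f (Icc u v)) : IsRevWinding d g u v n := by
  obtain ⟨φ, hc, hm, h0, h1, hφ⟩ := h
  exact ⟨φ, hc, hm, h0, h1, fun t ht => by rw [hfg ht, hφ t ht]⟩

namespace Realizes

variable {W : InfWord ℕ+} {u v : W.ι → ℝ}

lemma isIntervalFamily (h : Realizes d f a b W u v) : IsIntervalFamily a b u v where
  left_le i := (h.1 i).1
  lt i := (h.1 i).2.1
  le_right i := (h.1 i).2.2
  le_of_lt i j hij := h.2.1 i j hij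

lemma inX_iff (h : Realizes d f a b W u v) {t : ℝ} (ht : t ∈ Icc a b) :
    InX (f t) ↔ ∀ i, t ∉ Ioo (u i) (v i) := h.2.2.2 t ht

lemma isWinding_or (h : Realizes d f a b W u v) (i : W.ι) :
    IsWinding d f (u i) (v i) (W.letter i).1 ∨ IsRevWinding d f (u i) (v i) (W.letter i).1 := by
  have hi := h.2.2.1 i
  split_ifs at hi
  exacts [Or.inl hi, Or.inr hi]

lemma exists_ramp (h : Realizes d f a b W u v) (i : W.ι) :
    ∃ α : ℝ → ℝ, IsRamp α (u i) (v i) ∧ ∀ t ∈ Icc (u i) (v i),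
      (f t).pt = (d (W.letter i).1, phase (W.letter i).2 (α t)) := by
  obtain ⟨φ, hc, hm, h0, h1, hf⟩ : ∃ φ : ℝ → ℝ, ContinuousOn φ (Icc (u i) (v i)) ∧
      MonotoneOn φ (Icc (u i) (v i)) ∧ φ (u i) = 0 ∧ φ (v i) = 1 ∧
      ∀ t ∈ Icc (u i) (v i), (f t).pt = (d (W.letter i).1, phase (W.letter i).2 (φ t)) := by
    have hw := h.2.2.1 i
    simp only [phase]
    split_ifs at hw ⊢ with hl
    · simpa only [IsWinding, one_mul] using hw
    · simpa only [IsRevWinding, neg_one_mul, ← neg_mul] using hw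
  have huv := (h.isIntervalFamily.lt i).le
  exact ⟨_, .iccExtend huv hc hm h0 h1, fun t ht => by
    rw [hf t ht, IccExtend_of_mem _ _ ht, domRestrict_apply]⟩

lemma eq_left_and_eq_right (h : Realizes d f a b W u v) {x y : ℝ} (hax : a ≤ x) (hxy : x < y)
    (hyb : y ≤ b) (hx : InX (f x)) (hy : InX (f y)) (hout : ∀ t ∈ Ioo x y, ¬InX (f t)) :
    ∃ k, x = u k ∧ y = v k := by
  have hI := h.isIntervalFamily
  obtain ⟨m, hm⟩ := nonempty_Ioo.2 hxy
  have hmk := hout m hm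
  rw [h.inX_iff ⟨hax.trans hm.1.le, hm.2.le.trans hyb⟩] at hmk
  push Not at hmk
  obtain ⟨k, hk⟩ := hmk
  have huk : InX (f (u k)) :=
    (h.inX_iff (hI.Icc_subset k ⟨le_rfl, (hI.lt k).le⟩)).2 fun i => hI.left_notMem_Ioo i k
  have hvk : InX (f (v k)) :=
    (h.inX_iff (hI.Icc_subset k ⟨(hI.lt k).le, le_rfl⟩)).2 fun i => hI.right_notMem_Ioo i k
  have hux : u k ≤ x := not_lt.1 fun hlt => hout _ ⟨hlt, hk.1.trans hm.2⟩ huk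
  have hyv : y ≤ v k := not_lt.1 fun hlt => hout _ ⟨hm.1.trans hk.2, hlt⟩ hvk
  refine ⟨k, hux.eq_of_not_lt' fun hlt => ?_, hyv.eq_of_not_lt fun hlt => ?_⟩
  · exact (h.inX_iff ⟨hax, hxy.le.trans hyb⟩).1 hx k ⟨hlt, hxy.trans_le hyv⟩
  · exact (h.inX_iff ⟨hax.trans hxy.le, hyb⟩).1 hy k ⟨hux.trans_lt hxy, hlt⟩

lemma inX_left (h : Realizes d f a b W u v) (hab : a ≤ b) : InX (f a) :=
  (h.inX_iff ⟨le_rfl, hab⟩).2 fun i hi => (h.isIntervalFamily.left_le i).not_gt hi.1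

lemma inX_right (h : Realizes d f a b W u v) (hab : a ≤ b) : InX (f b) :=
  (h.inX_iff ⟨hab, le_rfl⟩).2 fun i hi => (h.isIntervalFamily.le_right i).not_gt hi.2

lemma isProper (h : Realizes d f a b W u v) (hab : a ≤ b) (hf : ContinuousOn f (Icc a b)) :
    IsProper d f a b := by
  refine ⟨hf, h.inX_left hab, h.inX_right hab, fun x y hax hxy hyb hx hy hout _ => ?_⟩
  obtain ⟨k, rfl, rfl⟩ := h.eq_left_and_eq_right hax hxy hyb hx hy hout
  exact ⟨_, h.isWinding_or k⟩

lemma restrict (h : Realizes d f a b W u v) (S : Set W.ι)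
    (hS : ∀ k ∈ S, EqOn g f (Icc (u k) (v k)))
    (hX : ∀ s ∈ Icc a b, (∀ k ∈ S, s ∉ Ioo (u k) (v k)) → InX (g s)) :
    Realizes d g a b (W.restrict S) (fun i => u i.1) (fun i => v i.1) := by
  refine ⟨fun i => h.1 i.1, fun i j => h.2.1 i.1 j.1, fun i => ?_, fun t ht => ⟨?_, ?_⟩⟩
  · have hi := h.2.2.1 i.1
    change if (W.letter i.1).2 then IsWinding d g (u i.1) (v i.1) (W.letter i.1).1
      else IsRevWinding d g (u i.1) (v i.1) (W.letter i.1).1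
    split_ifs at hi ⊢
    exacts [hi.congr (hS i.1 i.2), hi.congr (hS i.1 i.2)]
  · intro hg i hi
    rw [hS i.1 i.2 (Ioo_subset_Icc_self hi), h.inX_iff ht] at hg
    exact hg i.1 hi
  · exact fun hi => hX t ht fun k hk => hi ⟨k, hk⟩

end Realizes

end ProperPaths

section CancellingMap

open InfWord

lemma exists_continuous_mirror {Y : Type*} [TopologicalSpace Y] {a b : ℝ} (hab : a ≤ b)
    {q : ℝ → Y} (hq : ContinuousOn q (Icc a b)) :
    ∃ p : ℝ → Y, Continuous p ∧ EqOn p q (Icc a b) ∧ ∀ s, p (2 * b - s) = p s := by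
  refine ⟨fun s => IccExtend hab ((Icc a b).domRestrict q) (min s (2 * b - s)),
    hq.domRestrict.Icc_extend'.comp (by fun_prop), fun s hs => ?_, fun s => ?_⟩
  · simp only [min_eq_left (show s ≤ 2 * b - s by linarith [hs.2])]
    rw [IccExtend_of_mem _ _ hs, domRestrict_apply]
  · simp only [sub_sub_cancel, min_comm]

variable {D X : Type*} {W : InfWord D} {Γ : Set (W.ι × W.ι)} {a b : ℝ} {u v : W.ι → ℝ}

variable (Γ a b u v) in
/-- The leaves along which the path on `[a, 2b - a]` that runs along `[a,b]` and back is collapsed,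
together with the trivial leaves: the points of two intervals matched by `Γ` are joined to each
other, and the endpoint `a` and the points of unmatched intervals to their mirror images. -/
def doubledLeaves : Set (ℝ × ℝ) :=
  {z | (z.1 ∈ Icc a (2 * b - a) ∧ z.1 = z.2) ∨
    (z.1 ∈ Icc a b ∧ z.2 = 2 * b - z.1 ∧ (z.1 = a ∨ ∃ k ∉ matched Γ, z.1 ∈ Icc (u k) (v k))) ∨
    ∃ γ ∈ Γ, z.1 ∈ Icc (u γ.1) (v γ.1) ∧ z.2 ∈ Icc (u γ.2) (v γ.2)}

variable (Γ a b u v) in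
/-- `P` collapses the vertical and the horizontal leg of each leaf of the doubled path `q`, so that
the windings of `q` matched by `Γ` can be cancelled over `P`. -/
structure IsCancellingMap (q : ℝ → X) (P : ℝ × ℝ → X) : Prop where
  diag : ∀ s ∈ Icc a b, P (s, s) = q s
  diag_mirror : ∀ s ∈ Icc a b, P (2 * b - s, 2 * b - s) = q s
  left : ∀ t ∈ Icc a (2 * b - a), P (a, t) = q a ∧ P (t, 2 * b - a) = q a
  unmatched : ∀ k ∉ matched Γ, ∀ s ∈ Icc (u k) (v k), ∀ t ∈ Icc s (2 * b - s),
    P (s, t) = q s ∧ P (t, 2 * b - s) = q s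
  pair : ∀ γ ∈ Γ, ∀ x ∈ Icc (u γ.1) (v γ.1), ∀ y ∈ Icc (u γ.2) (v γ.2), ∀ t ∈ Icc x y,
    P (x, t) = q x ∧ P (t, y) = q x

lemma IsIntervalFamily.doubledLeaves_subset (hI : IsIntervalFamily a b u v) :
    doubledLeaves Γ a b u v ⊆ Icc a (2 * b - a) ×ˢ Icc a (2 * b - a) := by
  rintro z (⟨hz, hzz⟩ | ⟨hz, hzz, -⟩ | ⟨γ, -, hz, hz'⟩)
  · exact ⟨hz, hzz ▸ hz⟩
  · refine ⟨⟨hz.1, ?_⟩, ?_, ?_⟩ <;> linarith [hz.1, hz.2]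
  · have hab := hI.Icc_subset _ hz
    have hab' := hI.Icc_subset _ hz'
    refine ⟨⟨hab.1, ?_⟩, hab'.1, ?_⟩ <;> linarith [hab.1, hab.2, hab'.2]

lemma IsIntervalFamily.respectsLeaves (hI : IsIntervalFamily a b u v) (hΓ : InfNCIP W Γ)
    {p : ℝ → X} (hmirror : ∀ s, p (2 * b - s) = p s)
    (hpair : ∀ γ ∈ Γ, ∀ x ∈ Icc (u γ.1) (v γ.1), ∀ y ∈ Icc (u γ.2) (v γ.2), p x = p y) :
    RespectsLeaves p (doubledLeaves Γ a b u v) where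
  le := by
    rintro z (⟨-, hz⟩ | ⟨hz, hzz, -⟩ | ⟨γ, hγ, hz, hz'⟩)
    · exact hz.le
    · linarith [hz.2]
    · exact hz.2.trans ((hI.le_of_lt (hΓ.lt γ hγ)).trans hz'.1)
  eq := by
    rintro z (⟨-, hz⟩ | ⟨-, hz, -⟩ | ⟨γ, hγ, hz, hz'⟩)
    · rw [hz]
    · rw [hz, hmirror]
    · exact hpair γ hγ _ hz _ hz'
  crossing := by
    rintro z hz w (⟨-, hw⟩ | ⟨hw, hww, -⟩ | ⟨δ, hδ, hw, hw'⟩) hwz hzw hwz'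
    · linarith
    · rcases hz with ⟨-, hz⟩ | ⟨-, hz, -⟩ | ⟨γ, -, -, hz⟩
      · linarith
      · linarith
      · linarith [hw.2, (hI.Icc_subset _ hz).2]
    · rcases hz with ⟨-, hz⟩ | ⟨-, -, hz | ⟨k, hk, hz⟩⟩ | ⟨γ, hγ, hz, hz'⟩
      · linarith
      · linarith [(hI.Icc_subset _ hw).1]
      · exact absurd (hΓ.Icc_subset_matched hδ ⟨hI.index_le hw hz hwz, hI.index_le hz hw' hzw⟩) hk
      · obtain rfl | hne := eq_or_ne δ γ
        · exact hpair δ hδ _ hz _ hw'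
        · obtain ⟨h₁, -, h₂, h₃⟩ := hΓ.disj δ hδ γ hγ hne
          exact absurd ⟨(hI.index_le hw hz hwz).lt_of_ne h₁,
            (hI.index_le hz hw' hzw).lt_of_ne' h₂, (hI.index_le hw' hz' hwz').lt_of_ne h₃⟩
            (hΓ.noncross δ hδ γ hγ)

lemma IsIntervalFamily.exists_isCancellingMap [MetricSpace X] [SimplyConnectedSpace X]
    (hX : LocSimplyConnected X) (hI : IsIntervalFamily a b u v) (hab : a ≤ b) (hΓ : InfNCIP W Γ)
    {q : ℝ → X} (hq : ContinuousOn q (Icc a b))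
    (hpair : ∀ γ ∈ Γ, ∀ x ∈ Icc (u γ.1) (v γ.1), ∀ y ∈ Icc (u γ.2) (v γ.2), q x = q y) :
    ∃ P : C(ℝ × ℝ, X), IsCancellingMap Γ a b u v q P := by
  obtain ⟨p, hp, hpq, hmirror⟩ := exists_continuous_mirror hab hq
  have hpair' : ∀ γ ∈ Γ, ∀ x ∈ Icc (u γ.1) (v γ.1), ∀ y ∈ Icc (u γ.2) (v γ.2), p x = p y :=
    fun γ hγ x hx y hy => by
      rw [hpq (hI.Icc_subset _ hx), hpq (hI.Icc_subset _ hy), hpair γ hγ x hx y hy]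
  obtain ⟨P, hP⟩ :=
    (hI.respectsLeaves hΓ hmirror hpair').exists_extension hX hp hI.doubledLeaves_subset
  have ha : a ∈ Icc a b := left_mem_Icc.2 hab
  refine ⟨P, fun s hs => ?_, fun s hs => ?_, ?_, fun k hk s hs => ?_, fun γ hγ x hx y hy => ?_⟩
  · rw [← hpq hs]
    exact (hP (s, s) (Or.inl ⟨⟨hs.1, by linarith [hs.1, hs.2]⟩, rfl⟩) s ⟨le_rfl, le_rfl⟩).1
  · rw [← hpq hs, ← hmirror]
    have hs' : 2 * b - s ∈ Icc a (2 * b - a) := by constructor <;> linarith [hs.1, hs.2]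
    exact (hP (2 * b - s, 2 * b - s) (Or.inl ⟨hs', rfl⟩) _ ⟨le_rfl, le_rfl⟩).1
  · rw [← hpq ha]
    exact hP (a, 2 * b - a) (Or.inr (Or.inl ⟨ha, rfl, Or.inl rfl⟩))
  · rw [← hpq (hI.Icc_subset k hs)]
    exact hP (s, 2 * b - s) (Or.inr (Or.inl ⟨hI.Icc_subset k hs, rfl, Or.inr ⟨k, hk, hs⟩⟩))
  · rw [← hpq (hI.Icc_subset _ hx)]
    exact hP (x, y) (Or.inr (Or.inr ⟨γ, hγ, hx, hy⟩))

end CancellingMap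

section CancellingPhase

/-- The phase over `z` of the winding of sign `l` traversed along `α` together with the opposite
winding traversed along `β`; moving `z` off the diagonal cancels the two against each other. -/
def pairPhase (l : Bool) (α β : ℝ → ℝ) (z : ℝ × ℝ) : Circle :=
  phase l (min (α z.1) (1 - β z.2))

section PairPhase

variable {l : Bool} {α β : ℝ → ℝ} {u v u' v' : ℝ} {z : ℝ × ℝ}

lemma continuous_pairPhase (hα : Continuous α) (hβ : Continuous β) :
    Continuous (pairPhase l α β) := (continuous_phase l).comp (by fun_prop)

lemma pairPhase_of_le_left (hα : IsRamp α u v) (hβ : IsRamp β u' v') (hz : z.1 ≤ u) :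
    pairPhase l α β z = 1 := by
  rw [pairPhase, hα.eq_zero _ hz, min_eq_left (sub_nonneg.2 (hβ.le_one _)), phase_zero]

lemma pairPhase_of_right_le (hα : IsRamp α u v) (hβ : IsRamp β u' v') (hz : v' ≤ z.2) :
    pairPhase l α β z = 1 := by
  rw [pairPhase, hβ.eq_one _ hz, sub_self, min_eq_right (hα.nonneg _), phase_zero]

lemma pairPhase_of_between (hα : IsRamp α u v) (hβ : IsRamp β u' v') (hz : v ≤ z.1)
    (hz' : z.2 ≤ u') : pairPhase l α β z = 1 := by
  rw [pairPhase, hα.eq_one _ hz, hβ.eq_zero _ hz', sub_zero, min_self, phase_one]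

lemma pairPhase_diag (hα : IsRamp α u v) (hβ : IsRamp β u' v') (hvu : v ≤ u') (s : ℝ) :
    pairPhase l α β (s, s) = phase l (α s) * phase (!l) (β s) := by
  rcases le_total s u' with hs | hs
  · simp only [pairPhase, hβ.eq_zero s hs, sub_zero, min_eq_left (hα.le_one s), phase_zero, mul_one]
  · simp only [pairPhase, hα.eq_one s (hvu.trans hs), min_eq_right (sub_le_self 1 (hβ.nonneg s)),
      phase_one_sub, phase_one, one_mul]

end PairPhase

open InfWord

variable {D : Type*} {W : InfWord D}

/-- The finitely many positions of the letters `n` and `n⁻` in `W`. -/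
def InfWord.occ (W : InfWord D) (n : D) : Finset W.ι := (W.finOcc n).toFinset

lemma InfWord.mem_occ {n : D} {k : W.ι} : k ∈ W.occ n ↔ (W.letter k).1 = n :=
  Set.Finite.mem_toFinset _

/-- The pairs of `Γ` that match occurrences of the letter `n`. -/
def InfWord.pairsOf (Γ : Set (W.ι × W.ι)) (n : D) : Finset (W.ι × W.ι) :=
  (W.occ n ×ˢ W.occ n).filter (· ∈ Γ)

variable {Γ : Set (W.ι × W.ι)}

lemma InfWord.IsNoncrossing.mem_pairsOf (hΓ : W.IsNoncrossing Γ) {n : D} {γ : W.ι × W.ι} :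
    γ ∈ pairsOf Γ n ↔ γ ∈ Γ ∧ (W.letter γ.1).1 = n := by
  rw [pairsOf, Finset.mem_filter, Finset.mem_product, mem_occ, mem_occ, and_comm]
  exact and_congr_right fun hγ => by rw [← (hΓ.inv γ hγ).1, and_self]

lemma InfWord.IsNoncrossing.prod_pairsOf {M : Type*} [CommMonoid M] (hΓ : W.IsNoncrossing Γ) (n : D)
    (F : W.ι → M) :
    ∏ γ ∈ pairsOf Γ n, F γ.1 * F γ.2 = ∏ k ∈ (W.occ n).filter (· ∈ matched Γ), F k := by
  have hoccur : (W.occ n).filter (· ∈ matched Γ) =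
      (pairsOf Γ n).biUnion fun γ => {γ.1, γ.2} := by
    ext k
    simp only [Finset.mem_filter, mem_occ, Finset.mem_biUnion, hΓ.mem_pairsOf, Finset.mem_insert,
      Finset.mem_singleton]
    constructor
    · rintro ⟨rfl, γ, hγ, rfl | rfl⟩
      exacts [⟨γ, ⟨hγ, rfl⟩, Or.inl rfl⟩, ⟨γ, ⟨hγ, (hΓ.inv γ hγ).1⟩, Or.inr rfl⟩]
    · rintro ⟨γ, ⟨hγ, rfl⟩, rfl | rfl⟩
      exacts [⟨rfl, fst_mem_matched hγ⟩, ⟨(hΓ.inv γ hγ).1.symm, snd_mem_matched hγ⟩]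
  rw [hoccur, Finset.prod_biUnion]
  · refine Finset.prod_congr rfl fun γ hγ => (Finset.prod_pair ?_).symm
    exact (hΓ.lt γ (hΓ.mem_pairsOf.1 hγ).1).ne
  · intro γ hγ δ hδ hne
    have hdisj := hΓ.disj γ (hΓ.mem_pairsOf.1 hγ).1 δ (hΓ.mem_pairsOf.1 hδ).1 hne
    simp only [Function.onFun, Finset.disjoint_insert_left, Finset.disjoint_singleton_left,
      Finset.mem_insert, Finset.mem_singleton, not_or]
    exact ⟨⟨hdisj.1, hdisj.2.1⟩, hdisj.2.2⟩

variable (α : W.ι → ℝ → ℝ)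

/-- The phase at time `s` of the path that performs the windings of `W` at the positions in `T`,
the one at position `k` along `α k`. -/
def windingPhase (T : Finset W.ι) (s : ℝ) : Circle := ∏ k ∈ T, phase (W.letter k).2 (α k s)

variable (Γ) in
/-- The phase on the circle labelled `n` of the cancelling homotopy: the windings matched by `Γ` are
performed over `z` and the unmatched ones at time `s`. -/
def cancelPhase (z : ℝ × ℝ) (s : ℝ) (n : D) : Circle :=
  (∏ γ ∈ pairsOf Γ n, pairPhase (W.letter γ.1).2 (α γ.1) (α γ.2) z) *
    windingPhase α ((W.occ n).filter (· ∉ matched Γ)) s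

variable {α} {a b s : ℝ} {u v : W.ι → ℝ}

lemma continuous_cancelPhase (hα : ∀ k, IsRamp (α k) (u k) (v k)) {Z : Type*} [TopologicalSpace Z]
    {r : Z → ℝ × ℝ} {τ : Z → ℝ} (hr : Continuous r) (hτ : Continuous τ) (n : D) :
    Continuous fun x => cancelPhase Γ α (r x) (τ x) n := by
  refine .mul (continuous_finsetProd _ fun γ _ => ?_) (continuous_finsetProd _ fun k _ => ?_)
  · exact (continuous_pairPhase (hα γ.1).continuous (hα γ.2).continuous).comp hr
  · exact (continuous_phase _).comp ((hα k).continuous.comp hτ)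

lemma windingPhase_eq_one (hα : ∀ k, IsRamp (α k) (u k) (v k)) {T : Finset W.ι}
    (hs : ∀ k ∈ T, s ∉ Ioo (u k) (v k)) : windingPhase α T s = 1 :=
  Finset.prod_eq_one fun k hk => (hα k).phase_eq_one _ (hs k hk)

lemma windingPhase_eq_phase (hI : IsIntervalFamily a b u v)
    (hα : ∀ k, IsRamp (α k) (u k) (v k)) {T : Finset W.ι} {k : W.ι} (hk : k ∈ T)
    (hs : s ∈ Icc (u k) (v k)) : windingPhase α T s = phase (W.letter k).2 (α k s) :=
  Finset.prod_eq_single_of_mem k hk fun l _ hlk =>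
    (hα l).phase_eq_one _ fun hsl => hlk (hI.index_eq hsl hs)

lemma cancelPhase_diag (hI : IsIntervalFamily a b u v) (hα : ∀ k, IsRamp (α k) (u k) (v k))
    (hΓ : W.IsNoncrossing Γ) (n : D) :
    cancelPhase Γ α (s, s) s n = windingPhase α (W.occ n) s := by
  have hpair : ∀ γ ∈ pairsOf Γ n, pairPhase (W.letter γ.1).2 (α γ.1) (α γ.2) (s, s) =
      phase (W.letter γ.1).2 (α γ.1 s) * phase (W.letter γ.2).2 (α γ.2 s) := fun γ hγ => by
    have hγΓ := (hΓ.mem_pairsOf.1 hγ).1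
    rw [pairPhase_diag (hα _) (hα _) (hI.le_of_lt (hΓ.lt γ hγΓ)), (hΓ.inv γ hγΓ).2, Bool.not_not]
  rw [cancelPhase, Finset.prod_congr rfl hpair,
    hΓ.prod_pairsOf n fun k => phase (W.letter k).2 (α k s)]
  exact Finset.prod_filter_mul_prod_filter_not _ _ _

lemma cancelPhase_of_outside (hI : IsIntervalFamily a b u v)
    (hα : ∀ k, IsRamp (α k) (u k) (v k)) {z : ℝ × ℝ} (hz : z.1 ≤ a ∨ b ≤ z.2) (n : D) :
    cancelPhase Γ α z s n = windingPhase α ((W.occ n).filter (· ∉ matched Γ)) s := by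
  rw [cancelPhase, Finset.prod_eq_one, one_mul]
  intro γ _
  rcases hz with hz | hz
  · exact pairPhase_of_le_left (hα _) (hα _) (hz.trans (hI.left_le _))
  · exact pairPhase_of_right_le (hα _) (hα _) ((hI.le_right _).trans hz)

lemma exists_of_cancelPhase_ne_one (hα : ∀ k, IsRamp (α k) (u k) (v k)) (hΓ : W.IsNoncrossing Γ)
    {z : ℝ × ℝ} {n : D} (h : cancelPhase Γ α z s n ≠ 1) :
    (∃ γ ∈ Γ, (W.letter γ.1).1 = n ∧ (u γ.1 < z.1 ∧ z.2 < v γ.2) ∧ (z.1 < v γ.1 ∨ u γ.2 < z.2)) ∨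
      ∃ k ∉ matched Γ, (W.letter k).1 = n ∧ s ∈ Ioo (u k) (v k) := by
  by_contra! hnot
  refine h ?_
  rw [cancelPhase, Finset.prod_eq_one, one_mul, windingPhase_eq_one hα]
  · intro k hk
    rw [Finset.mem_filter, mem_occ] at hk
    exact hnot.2 k hk.2 hk.1
  · intro γ hγ
    rw [hΓ.mem_pairsOf] at hγ
    rcases le_or_gt z.1 (u γ.1) with h₁ | h₁
    · exact pairPhase_of_le_left (hα _) (hα _) h₁
    rcases le_or_gt (v γ.2) z.2 with h₂ | h₂
    · exact pairPhase_of_right_le (hα _) (hα _) h₂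
    · obtain ⟨h₃, h₄⟩ := hnot.1 γ hγ.1 hγ.2 ⟨h₁, h₂⟩
      exact pairPhase_of_between (hα _) (hα _) h₃ h₄

end CancellingPhase

section CancellingHomotopy

open InfWord

/-- For fixed `z.1 = s`, a path from `(s, s)` up to `(s, 2b - s)` and then across to
`(2b - s, 2b - s)`, with parameter `z.2 ∈ [0,1]`. -/
def sweep (b : ℝ) (z : ℝ × ℝ) : ℝ × ℝ :=
  (z.1 + max (2 * z.2 - 1) 0 * (2 * (b - z.1)), z.1 + min (2 * z.2) 1 * (2 * (b - z.1)))

lemma continuous_sweep (b : ℝ) : Continuous (sweep b) := by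
  unfold sweep
  fun_prop

lemma sweep_zero (b s : ℝ) : sweep b (s, 0) = (s, s) := by
  simp [sweep]

lemma sweep_one (b s : ℝ) : sweep b (s, 1) = (2 * b - s, 2 * b - s) := by
  norm_num [sweep]
  ring

lemma sweep_self (b t : ℝ) : sweep b (b, t) = (b, b) := by
  simp [sweep]

lemma exists_sweep_eq {b s t : ℝ} (hs : s ≤ b) (ht : t ∈ Icc (0 : ℝ) 1) :
    ∃ x ∈ Icc s (2 * b - s), sweep b (s, t) = (s, x) ∨ sweep b (s, t) = (x, 2 * b - s) := by
  rcases le_total (2 * t) 1 with ht' | ht'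
  · refine ⟨s + 2 * t * (2 * (b - s)), ⟨?_, ?_⟩, Or.inl ?_⟩
    · nlinarith [ht.1]
    · nlinarith
    · simp [sweep, ht']
  · refine ⟨s + (2 * t - 1) * (2 * (b - s)), ⟨?_, ?_⟩, Or.inr ?_⟩
    · nlinarith
    · nlinarith [ht.2]
    · simp only [sweep, max_eq_left (sub_nonneg.2 ht'), min_eq_right ht', Prod.mk.injEq, true_and]
      ring

variable {X : Type*} {a b : ℝ} {W : InfWord ℕ+} {u v : W.ι → ℝ} {Γ : Set (W.ι × W.ι)}
  {q : ℝ → X} {α : W.ι → ℝ → ℝ} {s t : ℝ}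

lemma IsCancellingMap.apply_sweep_of_unmatched {P : ℝ × ℝ → X}
    (hP : IsCancellingMap Γ a b u v q P) (hs : s ≤ b) (ht : t ∈ Icc (0 : ℝ) 1) {k : W.ι}
    (hk : k ∉ matched Γ) (hsk : s ∈ Icc (u k) (v k)) : P (sweep b (s, t)) = q s := by
  obtain ⟨x, hx, h | h⟩ := exists_sweep_eq hs ht <;> rw [h]
  exacts [(hP.unmatched k hk s hsk x hx).1, (hP.unmatched k hk s hsk x hx).2]

variable {d : ℕ+ → X}

lemma IsCancellingMap.apply_eq_of_cancelPhase_ne_one {P : ℝ × ℝ → X}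
    (hP : IsCancellingMap Γ a b u v q P) (hI : IsIntervalFamily a b u v)
    (hα : ∀ k, IsRamp (α k) (u k) (v k))
    (hq : ∀ k, ∀ s ∈ Icc (u k) (v k), q s = d (W.letter k).1) (hΓ : W.IsNoncrossing Γ)
    (hs : s ≤ b) (ht : t ∈ Icc (0 : ℝ) 1) {n : ℕ+}
    (hne : cancelPhase Γ α (sweep b (s, t)) s n ≠ 1) : P (sweep b (s, t)) = d n := by
  have hle : (sweep b (s, t)).1 ≤ (sweep b (s, t)).2 := by
    obtain ⟨x, hx, h | h⟩ := exists_sweep_eq hs ht <;> rw [h]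
    exacts [hx.1, hx.2]
  obtain ⟨γ, hγ, rfl, ⟨hl, hr⟩, h | h⟩ | ⟨k, hk, rfl, hsk⟩ := exists_of_cancelPhase_ne_one hα hΓ hne
  · have hx := mem_Icc.2 ⟨hl.le, h.le⟩
    rw [← hq _ _ hx]
    exact (hP.pair γ hγ _ hx _ (right_mem_Icc.2 (hI.lt _).le) _ ⟨hle, hr.le⟩).1
  · have hx := left_mem_Icc.2 (hI.lt γ.1).le
    rw [← hq _ _ hx]
    exact (hP.pair γ hγ _ hx _ ⟨h.le, hr.le⟩ _ ⟨hl.le, hle⟩).2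
  · have hsk' := Ioo_subset_Icc_self hsk
    rw [← hq k s hsk', hP.apply_sweep_of_unmatched hs ht hk hsk']

variable [MetricSpace X] {f : ℝ → ESp X d}

/-- The homotopy that performs the windings of `α` over the points `P (sweep b (s, t))`, where those
matched by `Γ` cancel each other as `t` increases. -/
def cancelHomotopy (d : ℕ+ → X) (b : ℝ) (P : ℝ × ℝ → X) (Γ : Set (W.ι × W.ι)) (α : W.ι → ℝ → ℝ)
    (z : ℝ × ℝ) : ESp X d :=
  mkE d (P (sweep b z)) (cancelPhase Γ α (sweep b z) z.1)

lemma continuousOn_cancelHomotopy (hd : Function.Injective d) {P : C(ℝ × ℝ, X)}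
    (hP : IsCancellingMap Γ a b u v q P) (hI : IsIntervalFamily a b u v)
    (hα : ∀ k, IsRamp (α k) (u k) (v k))
    (hq : ∀ k, ∀ s ∈ Icc (u k) (v k), q s = d (W.letter k).1) (hΓ : W.IsNoncrossing Γ) :
    ContinuousOn (cancelHomotopy d b P Γ α) (Icc a b ×ˢ Icc (0 : ℝ) 1) :=
  continuousOn_mkE hd (P.continuous.comp (continuous_sweep b)).continuousOn
    (fun n => (continuous_cancelPhase hα (continuous_sweep b) continuous_fst n).continuousOn)
    fun _ hz _ hne => hP.apply_eq_of_cancelPhase_ne_one hI hα hq hΓ hz.1.2 hz.2 hne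

lemma cancelHomotopy_zero {P : ℝ × ℝ → X} (hP : IsCancellingMap Γ a b u v q P)
    (hI : IsIntervalFamily a b u v) (hα : ∀ k, IsRamp (α k) (u k) (v k)) (hΓ : W.IsNoncrossing Γ)
    (hs : s ∈ Icc a b) :
    cancelHomotopy d b P Γ α (s, 0) = mkE d (q s) fun n => windingPhase α (W.occ n) s := by
  simp only [cancelHomotopy, sweep_zero, hP.diag s hs]
  exact congrArg _ (funext fun n => cancelPhase_diag hI hα hΓ n)

lemma cancelHomotopy_one {P : ℝ × ℝ → X} (hP : IsCancellingMap Γ a b u v q P)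
    (hI : IsIntervalFamily a b u v) (hα : ∀ k, IsRamp (α k) (u k) (v k)) (hs : s ∈ Icc a b) :
    cancelHomotopy d b P Γ α (s, 1) =
      mkE d (q s) fun n => windingPhase α ((W.occ n).filter (· ∉ matched Γ)) s := by
  simp only [cancelHomotopy, sweep_one, hP.diag_mirror s hs]
  exact congrArg _ (funext fun n => cancelPhase_of_outside hI hα (Or.inr (by linarith [hs.2])) n)

lemma cancelHomotopy_left {P : ℝ × ℝ → X} (hP : IsCancellingMap Γ a b u v q P)
    (hI : IsIntervalFamily a b u v) (hα : ∀ k, IsRamp (α k) (u k) (v k)) (hab : a ≤ b)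
    (ht : t ∈ Icc (0 : ℝ) 1) : cancelHomotopy d b P Γ α (a, t) = emb d (q a) := by
  obtain ⟨hsweep, hout⟩ : P (sweep b (a, t)) = q a ∧
      ((sweep b (a, t)).1 ≤ a ∨ b ≤ (sweep b (a, t)).2) := by
    obtain ⟨x, hx, h | h⟩ := exists_sweep_eq hab ht <;> rw [h]
    exacts [⟨(hP.left x hx).1, Or.inl le_rfl⟩, ⟨(hP.left x hx).2, Or.inr (by linarith)⟩]
  rw [cancelHomotopy, hsweep]
  refine mkE_eq_emb fun n _ => ?_
  rw [cancelPhase_of_outside hI hα hout]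
  exact windingPhase_eq_one hα fun k _ hk => (hI.left_le k).not_gt hk.1

lemma cancelHomotopy_right {P : ℝ × ℝ → X} (hP : IsCancellingMap Γ a b u v q P)
    (hI : IsIntervalFamily a b u v) (hα : ∀ k, IsRamp (α k) (u k) (v k)) (hab : a ≤ b) (t : ℝ) :
    cancelHomotopy d b P Γ α (b, t) = emb d (q b) := by
  simp only [cancelHomotopy, sweep_self, hP.diag b (right_mem_Icc.2 hab)]
  refine mkE_eq_emb fun n _ => ?_
  rw [cancelPhase_of_outside hI hα (Or.inr le_rfl)]
  exact windingPhase_eq_one hα fun k _ hk => (hI.le_right k).not_gt hk.2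

lemma mkE_windingPhase (hd : Function.Injective d) (hI : IsIntervalFamily a b u v)
    (hα : ∀ k, IsRamp (α k) (u k) (v k)) {p : ESp X d} {k : W.ι} (hs : s ∈ Icc (u k) (v k))
    (hp : p.pt = (d (W.letter k).1, phase (W.letter k).2 (α k s))) {T : ℕ+ → Finset W.ι}
    (hk : k ∈ T (W.letter k).1) : mkE d p.pt.1 (fun n => windingPhase α (T n) s) = p := by
  refine ESp.ext_pt ?_
  rw [hp, mkE_apply hd, windingPhase_eq_phase hI hα hk hs]

lemma Realizes.eq_mkE_windingPhase (h : Realizes d f a b W u v) (hd : Function.Injective d)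
    (hα : ∀ k, IsRamp (α k) (u k) (v k)) (hf : ∀ k, ∀ t ∈ Icc (u k) (v k),
      (f t).pt = (d (W.letter k).1, phase (W.letter k).2 (α k t))) (hs : s ∈ Icc a b) :
    mkE d (f s).pt.1 (fun n => windingPhase α (W.occ n) s) = f s := by
  by_cases hk : ∃ k, s ∈ Ioo (u k) (v k)
  · obtain ⟨k, hk⟩ := hk
    have hk' := Ioo_subset_Icc_self hk
    exact mkE_windingPhase hd h.isIntervalFamily hα hk' (hf k s hk') (mem_occ.2 rfl)
  · push Not at hk
    rw [mkE_eq_emb fun n _ => windingPhase_eq_one hα fun k _ => hk k]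
    exact ((h.inX_iff hs).2 hk).eq_emb.symm

lemma Realizes.exists_cancelling_homotopy [SimplyConnectedSpace X] (hX : LocSimplyConnected X)
    (hd : Function.Injective d) (hab : a ≤ b) (hf : ContinuousOn f (Icc a b))
    (h : Realizes d f a b W u v) (hΓ : InfNCIP W Γ) :
    ∃ g : ℝ → ESp X d, HtpyRel d f g a b ∧ (∀ k ∈ (matched Γ)ᶜ, EqOn g f (Icc (u k) (v k))) ∧
      ∀ s ∈ Icc a b, (∀ k ∈ (matched Γ)ᶜ, s ∉ Ioo (u k) (v k)) → InX (g s) := by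
  have hI := h.isIntervalFamily
  choose α hα hfα using h.exists_ramp
  have hq : ∀ k, ∀ s ∈ Icc (u k) (v k), (f s).pt.1 = d (W.letter k).1 := fun k s hs =>
    congrArg Prod.fst (hfα k s hs)
  obtain ⟨P, hP⟩ := hI.exists_isCancellingMap hX hab hΓ (continuous_pt_fst.comp_continuousOn hf)
    fun γ hγ x hx y hy => (hq _ x hx).trans ((hΓ.inv γ hγ).1 ▸ (hq _ y hy).symm)
  have hnc := hΓ.isNoncrossing
  refine ⟨fun s => cancelHomotopy d b P Γ α (s, 1), ⟨_,
    continuousOn_cancelHomotopy hd hP hI hα hq hnc, fun s hs => ⟨?_, rfl⟩, fun t ht => ⟨?_, ?_⟩⟩,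
    fun k hk s hs => ?_, fun s hs hout => ?_⟩
  · exact (cancelHomotopy_zero hP hI hα hnc hs).trans (h.eq_mkE_windingPhase hd hα hfα hs)
  · exact (cancelHomotopy_left hP hI hα hab ht).trans (h.inX_left hab).eq_emb.symm
  · exact (cancelHomotopy_right hP hI hα hab t).trans (h.inX_right hab).eq_emb.symm
  · refine (cancelHomotopy_one hP hI hα (hI.Icc_subset k hs)).trans ?_
    exact mkE_windingPhase hd hI hα hs (hfα k s hs) (Finset.mem_filter.2 ⟨mem_occ.2 rfl, hk⟩)
  · change InX (cancelHomotopy d b P Γ α (s, 1))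
    rw [cancelHomotopy_one hP hI hα hs, mkE_eq_emb]
    · rfl
    · exact fun n _ => windingPhase_eq_one hα fun k hk => hout k (Finset.mem_filter.1 hk).2

end CancellingHomotopy

section ReducedWord

variable {X : Type*} [MetricSpace X] {d : ℕ+ → X} {f g : ℝ → ESp X d} {a b : ℝ}

lemma HtpyRel.continuousOn_right (h : HtpyRel d f g a b) : ContinuousOn g (Icc a b) := by
  obtain ⟨H, hH, hfg, -⟩ := h
  refine ContinuousOn.congr ?_ fun s hs => (hfg s hs).2.symm
  exact hH.comp (by fun_prop) fun s hs => ⟨hs, right_mem_Icc.2 zero_le_one⟩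

lemma HtpyRel.left_eq (h : HtpyRel d f g a b) (hab : a ≤ b) : g a = f a := by
  obtain ⟨H, -, hfg, hends⟩ := h
  exact (hfg a (left_mem_Icc.2 hab)).2.symm.trans (hends 1 (right_mem_Icc.2 zero_le_one)).1

lemma HtpyRel.right_eq (h : HtpyRel d f g a b) (hab : a ≤ b) : g b = f b := by
  obtain ⟨H, -, hfg, hends⟩ := h
  exact (hfg b (right_mem_Icc.2 hab)).2.symm.trans (hends 1 (right_mem_Icc.2 zero_le_one)).2

open InfWord in
theorem proper_path_reduced_word_general (hd : Function.Injective d) [SimplyConnectedSpace X]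
    (hX : LocSimplyConnected X) (hab : a ≤ b) (hf : ContinuousOn f (Icc a b)) {W : InfWord ℕ+}
    {u v : W.ι → ℝ} (h : Realizes d f a b W u v) :
    ∃ (g : ℝ → ESp X d) (W₀ : InfWord ℕ+) (u₀ v₀ : W₀.ι → ℝ),
      IsProper d g a b ∧ g a = f a ∧ g b = f b ∧
      Realizes d g a b W₀ u₀ v₀ ∧
      W₀.Reduced ∧ (∀ F : Finset ℕ+, W₀.evalF F = W.evalF F) ∧
      HtpyRel d f g a b := by
  obtain ⟨Γ, hΓ⟩ := InfNCIP.exists_maximal W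
  obtain ⟨g, hfg, hkeep, hout⟩ := h.exists_cancelling_homotopy hX hd hab hf hΓ.prop
  have hg := h.restrict (matched Γ)ᶜ hkeep hout
  exact ⟨g, W.restrict (matched Γ)ᶜ, _, _, hg.isProper hab hfg.continuousOn_right,
    hfg.left_eq hab, hfg.right_eq hab, hg, InfNCIP.reduced_of_maximal hΓ,
    hΓ.prop.evalF_restrict_compl_matched, hfg⟩

end ReducedWord

end

/-- Let `X` be simply connected and locally simply connected, `D` countable dense, and `f`
a proper path in `E(X,D)`.  Then there is a proper path `g`, homotopic to `f` rel
endpoints, whose word `W^g` is the reduced word equivalent to `W^f`. -/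
theorem proper_path_reduced_word {X : Type*} [MetricSpace X]
    (d : ℕ+ → X) (hd : Function.Injective d) (hdense : DenseRange d)
    [SimplyConnectedSpace X] (hlsc : LocSimplyConnected X)
    (f : ℝ → ESp X d) (a b : ℝ) (hab : a ≤ b) (hf : IsProper d f a b)
    (W : InfWord ℕ+) (u v : W.ι → ℝ) (hreal : Realizes d f a b W u v) :
    ∃ (g : ℝ → ESp X d) (W₀ : InfWord ℕ+) (u₀ v₀ : W₀.ι → ℝ),
      IsProper d g a b ∧ g a = f a ∧ g b = f b ∧
      Realizes d g a b W₀ u₀ v₀ ∧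
      W₀.Reduced ∧ (∀ F : Finset ℕ+, W₀.evalF F = W.evalF F) ∧
      HtpyRel d f g a b := by
  exact proper_path_reduced_word_general hd hlsc hab hf.1 hreal

end EarringPaper
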